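/- arXiv:2004.00811 — 8 statements merged into one kernel-verified Lean document; each statement's English description precedes it below -/
import Mathlib

section
/- Let F be a finite field and let K ≤ N be positive integers. Let f : Fin N → ((Fin K → F) → F) be an MDS family of encoding functions, i.e. for every subset S ⊆ Fin N with |S| = K, the map sending x : Fin K → F to the tuple (f_n(x))_{n ∈ S} is injective. Then for every m with 1 ≤ m ≤ K and every subset T ⊆ Fin N with |T| = m, the set {k ∈ Fin K : some f_n with n ∈ T depends on coordinate k} has cardinality at least m. -/
/-!
A function of `x` is determined by the coordinates of `x` it depends on
(`apply_eq_of_agree_off`). Let `D` be the set of coordinates on which the functions indexed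
by `T` depend, and extend `T` to a set `S` of size `K`. The restriction of `x` to `D` determines
the values indexed by `T`, so together with the values indexed by `S \ T` it determines `x` by
the MDS property. Hence `|F| ^ K ≤ |F| ^ (|D| + K - m)`, and `m ≤ |D|` as `|F| > 1`.
-/

/-- `f` depends on coordinate `k` if changing only the `k`-th input can change the output. -/
def Depends {F : Type*} {K : ℕ} (f : (Fin K → F) → F) (k : Fin K) : Prop :=
  ∃ x y : Fin K → F, (∀ j : Fin K, j ≠ k → x j = y j) ∧ f x ≠ f y

/-- A family of encoding functions is MDS if for every `K`-subset `S` of encoding nodes,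
the map from messages to the `S`-indexed tuple of coded symbols is injective. -/
def IsMDSFamily {F : Type*} {N K : ℕ} (f : Fin N → ((Fin K → F) → F)) : Prop :=
  ∀ S : Finset (Fin N), S.card = K →
    Function.Injective (fun x : Fin K → F => fun n : S => f n x)

/-- Changing finitely many coordinates on which `f` does not depend leaves its value unchanged:
they can be changed one at a time. -/
lemma apply_eq_of_agree_off {F : Type*} {K : ℕ} (f : (Fin K → F) → F) (A : Finset (Fin K)) :
    ∀ x y : Fin K → F, (∀ k ∉ A, x k = y k) → (∀ k ∈ A, ¬ Depends f k) → f x = f y := by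
  induction A using Finset.induction_on with
  | empty =>
    intro x y h _
    rw [funext fun k => h k (Finset.notMem_empty k)]
  | insert a A _ ih =>
    intro x y h hA
    have h1 : f x = f (Function.update x a (y a)) := by
      by_contra hne
      exact hA a (Finset.mem_insert_self a A)
        ⟨x, _, fun j hj => (Function.update_of_ne hj _ _).symm, hne⟩
    rw [h1]
    refine ih _ _ (fun k hk => ?_) (fun k hk => hA k (Finset.mem_insert_of_mem hk))
    by_cases hka : k = a
    · subst hka
      simp
    · rw [Function.update_of_ne hka]
      exact h k (by simp [hka, hk])

/-- Any `m` functions of an MDS family together depend on at least `m` coordinates. -/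
theorem stmt4 {F : Type*} [Field F] [Fintype F] {N K : ℕ} (hK : 1 ≤ K) (hKN : K ≤ N)
    (f : Fin N → ((Fin K → F) → F)) (hMDS : IsMDSFamily f)
    (m : ℕ) (hm1 : 1 ≤ m) (hmK : m ≤ K) (T : Finset (Fin N)) (hT : T.card = m) :
    m ≤ {k : Fin K | ∃ n ∈ T, Depends (f n) k}.ncard := by
  classical
  obtain ⟨S, hTS, -, hS⟩ := Finset.exists_subsuperset_card_eq (Finset.subset_univ T)
    (n := K) (by omega) (by simpa using hKN)
  set D : Finset (Fin K) := Finset.univ.filter fun k => ∃ n ∈ T, Depends (f n) k with hD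
  have hDc : {k : Fin K | ∃ n ∈ T, Depends (f n) k}.ncard = D.card := by
    rw [← Set.ncard_coe_finset]
    simp [hD]
  rw [hDc]
  have hinj : Function.Injective (fun x : Fin K → F =>
      ((fun k : D => x k, fun n : (S \ T : Finset (Fin N)) => f n x) :
        (D → F) × ((S \ T : Finset (Fin N)) → F))) := by
    intro x y hxy
    obtain ⟨h1, h2⟩ := Prod.mk.inj hxy
    apply hMDS S hS
    funext ⟨n, hn⟩
    by_cases hnT : n ∈ T
    · refine apply_eq_of_agree_off (f n) Dᶜ x y (fun k hk => ?_) (fun k hk hdep => ?_)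
      · exact congrFun h1 ⟨k, by simpa using hk⟩
      · exact Finset.mem_compl.1 hk (by simpa [hD] using ⟨n, hnT, hdep⟩)
    · exact congrFun h2 ⟨n, Finset.mem_sdiff.2 ⟨hn, hnT⟩⟩
  have hcard := Fintype.card_le_of_injective _ hinj
  simp only [Fintype.card_prod, Fintype.card_fun, Fintype.card_coe, Fintype.card_fin,
    ← pow_add, Finset.card_sdiff_of_subset hTS, hS, hT] at hcard
  have := (Nat.pow_le_pow_iff_right Fintype.one_lt_card).1 hcard
  omega
end

section
/- Let F be a finite field, let 2 ≤ K ≤ N, and let f : Fin N → ((Fin K → F) → F) be an MDS family. Then for every coordinate k ∈ Fin K there do not exist two distinct indices n₁ ≠ n₂ in Fin N such that both f_{n₁} and f_{n₂} depend on no coordinate other than k (i.e. neither depends on any coordinate j ≠ k). In particular, among an MDS family there is at most one univariate function of each input. -/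
/-- A function depending on no coordinate other than `k` is determined by the `k`-th input: two
messages with the same `k`-th input are joined by changing the other coordinates one at a time. -/
lemma eq_of_not_depends {F : Type*} {K : ℕ} (g : (Fin K → F) → F) (k : Fin K)
    (h : ∀ j : Fin K, j ≠ k → ¬ Depends g j) (x y : Fin K → F) (hk : x k = y k) :
    g x = g y := by
  suffices H : ∀ (s : Finset (Fin K)) (x : Fin K → F), x k = y k →
      (∀ j, j ∉ s → x j = y j) → g x = g y from
    H Finset.univ x hk (fun j hj => absurd (Finset.mem_univ j) hj)
  intro s
  induction s using Finset.induction_on with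
  | empty => intro x _ hx; rw [funext fun j => hx j (Finset.notMem_empty j)]
  | insert a s _ ih =>
    intro x hxk hx
    by_cases hak : a = k
    · refine ih x hxk fun j hj => ?_
      by_cases hja : j = a
      · rw [hja, hak, hxk]
      · exact hx j (by simp [hja, hj])
    · have h1 : g x = g (Function.update x a (y a)) := by
        by_contra hne
        exact h a hak ⟨x, _, fun j hj => by simp [hj], hne⟩
      rw [h1]
      refine ih _ ?_ fun j hj => ?_
      · rw [Function.update_of_ne (Ne.symm hak), hxk]
      · by_cases hja : j = a
        · subst hja; simp
        · rw [Function.update_of_ne hja]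
          exact hx j (by simp [hja, hj])

/-- In an MDS family there cannot be two distinct functions each depending on no
coordinate other than `k`: at most one univariate function of each input. -/
theorem stmt5 {F : Type*} [Field F] [Fintype F] {N K : ℕ} (hK : 2 ≤ K) (hKN : K ≤ N)
    (f : Fin N → ((Fin K → F) → F)) (hMDS : IsMDSFamily f) (k : Fin K) :
    ¬ ∃ n₁ n₂ : Fin N, n₁ ≠ n₂ ∧
        (∀ j : Fin K, j ≠ k → ¬ Depends (f n₁) j) ∧
        (∀ j : Fin K, j ≠ k → ¬ Depends (f n₂) j) := by
  rintro ⟨n₁, n₂, hne, h₁, h₂⟩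
  classical
  obtain ⟨S, hS, hcard⟩ := Finset.exists_superset_card_eq (s := {n₁, n₂}) (n := K)
    (by rw [Finset.card_pair hne]; exact hK) (by simpa using hKN)
  have hinj := hMDS S hcard
  -- The embedding of the messages whose `k`-th input is `0`.
  let e : ({j : Fin K // j ≠ k} → F) → (Fin K → F) :=
    fun z j => if hj : j ≠ k then z ⟨j, hj⟩ else 0
  have hek : ∀ z, e z k = 0 := fun z => by simp [e]
  have hφ : Function.Injective
      (fun z : {j : Fin K // j ≠ k} → F =>
        fun n : {n // n ∈ S \ {n₁, n₂}} => f n (e z)) := by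
    intro z w hzw
    have hzw' : e z = e w := by
      apply hinj
      funext n
      by_cases hn₁ : (n : Fin N) = n₁
      · simpa only [hn₁] using eq_of_not_depends _ k h₁ (e z) (e w) (by rw [hek, hek])
      by_cases hn₂ : (n : Fin N) = n₂
      · simpa only [hn₂] using eq_of_not_depends _ k h₂ (e z) (e w) (by rw [hek, hek])
      exact congrFun hzw ⟨n, by simp [hn₁, hn₂]⟩
    funext j
    simpa [e, j.2] using congrFun hzw' j
  have hle := Fintype.card_le_of_injective _ hφ
  rw [Fintype.card_fun, Fintype.card_fun, Fintype.card_coe, Finset.card_sdiff_of_subset hS, hcard,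
    Finset.card_pair hne, Fintype.card_subtype_compl, Fintype.card_fin, Fintype.card_subtype_eq,
    Nat.pow_le_pow_iff_right Fintype.one_lt_card] at hle
  omega
end

section
/- Let F be a finite field, let K = h + β with h ≥ 1 and β ≥ 1, and let f : Fin N → ((Fin K → F) → F) be an MDS family with N ≥ K. Let A₁, A₂ ⊆ Fin K be two distinct subsets with |A₁| = |A₂| = β, and let S₁, S₂ ⊆ Fin N be sets of h indices such that no f_n with n ∈ S₁ depends on any coordinate in A₁, and no f_n with n ∈ S₂ depends on any coordinate in A₂. Then S₁ ≠ S₂. -/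
/-- Independence of each single coordinate in `U` gives independence of all of them jointly:
the coordinates in `U` are changed one at a time. -/
theorem eq_of_agree_off {F : Type*} {K : ℕ} (g : (Fin K → F) → F) (U : Finset (Fin K)) :
    (∀ k ∈ U, ¬ Depends g k) →
      ∀ x y : Fin K → F, (∀ j, j ∉ U → x j = y j) → g x = g y := by
  induction U using Finset.induction_on with
  | empty =>
    intro _ x y hxy
    rw [funext fun j => hxy j (Finset.notMem_empty j)]
  | insert a U ha ih =>
    intro hU x y hxy
    have e₁ : g x = g (Function.update x a (y a)) := by
      by_contra hne
      refine hU a (Finset.mem_insert_self a U) ⟨x, Function.update x a (y a), ?_, hne⟩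
      intro j hj
      rw [Function.update_of_ne hj]
    rw [e₁]
    refine ih (fun k hk => hU k (Finset.mem_insert_of_mem hk)) _ _ fun j hj => ?_
    by_cases hja : j = a
    · subst hja
      simp
    · rw [Function.update_of_ne hja]
      exact hxy j (by simp [hja, hj])

/-- In an MDS family, `h` functions can jointly ignore at most `β = K - h` coordinates. -/
theorem card_le_of_not_depends {F : Type*} [Field F] [Fintype F] {N h β : ℕ}
    (hKN : h + β ≤ N)
    (f : Fin N → ((Fin (h + β) → F) → F)) (hMDS : IsMDSFamily f)
    (U : Finset (Fin (h + β))) (S : Finset (Fin N)) (hS : S.card = h)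
    (hU : ∀ n ∈ S, ∀ k ∈ U, ¬ Depends (f n) k) : U.card ≤ β := by
  classical
  obtain ⟨T, hST, hT⟩ : ∃ T : Finset (Fin N), S ⊆ T ∧ T.card = h + β :=
    Finset.exists_superset_card_eq (by omega) (by simpa using hKN)
  let ext : (U → F) → (Fin (h + β) → F) := fun u j => if hj : j ∈ U then u ⟨j, hj⟩ else 0
  have hinj : Function.Injective
      (fun (u : U → F) (n : ↥(T \ S)) => f n (ext u)) := by
    intro u v huv
    have hext : ext u = ext v := by
      apply hMDS T hT
      funext n
      by_cases hn : (n : Fin N) ∈ S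
      · exact eq_of_agree_off (f n) U (hU n hn) _ _ fun j hj => by simp [ext, hj]
      · exact congrFun huv ⟨n, Finset.mem_sdiff.2 ⟨n.2, hn⟩⟩
    funext j
    simpa [ext] using congrFun hext j
  have hcard := Fintype.card_le_of_injective _ hinj
  rw [Fintype.card_fun, Fintype.card_fun, Fintype.card_coe, Fintype.card_coe,
    Finset.card_sdiff_of_subset hST, hT, hS, Nat.add_sub_cancel_left] at hcard
  exact (Nat.pow_le_pow_iff_right Fintype.one_lt_card).1 hcard

/-- For two distinct `β`-subsets of inputs, the corresponding sets of `h` functions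
not depending on them must differ. -/
theorem stmt8 {F : Type*} [Field F] [Fintype F] {N h β : ℕ}
    (hh : 1 ≤ h) (hβ : 1 ≤ β) (hKN : h + β ≤ N)
    (f : Fin N → ((Fin (h + β) → F) → F)) (hMDS : IsMDSFamily f)
    (A₁ A₂ : Finset (Fin (h + β))) (hA : A₁ ≠ A₂)
    (hA₁ : A₁.card = β) (hA₂ : A₂.card = β)
    (S₁ S₂ : Finset (Fin N)) (hS₁ : S₁.card = h) (hS₂ : S₂.card = h)
    (h₁ : ∀ n ∈ S₁, ∀ k ∈ A₁, ¬ Depends (f n) k)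
    (h₂ : ∀ n ∈ S₂, ∀ k ∈ A₂, ¬ Depends (f n) k) :
    S₁ ≠ S₂ := by
  rintro rfl
  have hU : (A₁ ∪ A₂).card ≤ β := by
    refine card_le_of_not_depends hKN f hMDS _ S₁ hS₁ fun n hn k hk => ?_
    rcases Finset.mem_union.1 hk with hk | hk
    · exact h₁ n hn k hk
    · exact h₂ n hn k hk
  have e₁ := Finset.eq_of_subset_of_card_le (Finset.subset_union_left (s₁ := A₁) (s₂ := A₂))
    (by omega)
  have e₂ := Finset.eq_of_subset_of_card_le (Finset.subset_union_right (s₁ := A₁) (s₂ := A₂))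
    (by omega)
  exact hA (e₁.trans e₂.symm)
end

section
/- Let F be a field, let h ≥ 1, β ≥ 1, v ≥ 1, and set t = h + 2βv − β − 1. Let E be a t × β matrix over F such that: (i) E has rank β; (ii) E has at most h − 1 zero rows; and (iii) the submatrix formed by any h + β rows of E has rank β. Then there exists a partition of the row index set {1,…,t} into sets R₁,…,R_{2v−1} with |R₁| = h + β − 1 and |R_i| = β for 2 ≤ i ≤ 2v − 1, such that for every i ∈ {1,…,2v−1} the submatrix of E formed by the rows in R_i has rank β. -/
/-!
The `2v - 2` blocks of size `β` can be chosen greedily, one at a time, as long as the rows left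
over still span; the block of size `h + β - 1` is what remains at the end.
By the hypothesis on sets of `h + β` rows, the remainder spans automatically except possibly in the
last step, so the content is `exists_basis_sdiff_spanning`: a set `S` of at least `h + 2β - 1` rows
contains a basis `B` whose complement in `S` spans.

For that, take any basis `B ⊆ S` and suppose that `C = S \ B` does not span. Then a maximal
independent set of rows in `C` has at most `β - 1` elements, hence misses at least `h` rows of `C`,
and since at most `h - 1` rows vanish, one of them, `c`, is nonzero; removing it does not change
the span of `C`. Complete `c` to a basis `B' ⊆ B ∪ {c}`, which omits some `b ∈ B`. Then `S \ B'`
contains `b` and `C \ {c}`, so its span contains that of the `≥ h + β` rows `C ∪ {b}`,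
which is everything.
-/

section
variable {F ι V : Type*} [Field F] [AddCommGroup V] [Module F V]

theorem card_eq_finrank_of_basis {f : ι → V} {B : Finset ι}
    (hi : LinearIndepOn F f (B : Set ι)) (hs : Submodule.span F (f '' (B : Set ι)) = ⊤) :
    B.card = Module.finrank F V := by
  have h := finrank_span_eq_card (R := F) (b := fun x : (B : Set ι) => f x) hi
  rw [← Set.image_eq_range, hs, finrank_top] at h
  simpa using h.symm

theorem exists_finset_indep_extension (f : ι → V) {s S : Finset ι}
    (hs : LinearIndepOn F f (s : Set ι)) (hsS : s ⊆ S) :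
    ∃ B ⊆ S, s ⊆ B ∧ Submodule.span F (f '' (S : Set ι)) ≤ Submodule.span F (f '' (B : Set ι)) ∧
      LinearIndepOn F f (B : Set ι) := by
  obtain ⟨b, hbS, hsb, hsp, hb⟩ := exists_linearIndepOn_extension hs (Finset.coe_subset.2 hsS)
  lift b to Finset ι using S.finite_toSet.subset hbS
  exact ⟨b, Finset.coe_subset.1 hbS, Finset.coe_subset.1 hsb, Submodule.span_le.2 hsp, hb⟩

variable [DecidableEq ι] [Module.Finite F V]

/-- If at most `h - 1` of the vectors in `S` vanish and any `h + dim V` of them span, then as soon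
as `S` has `h + 2 dim V - 1` elements it contains a basis whose complement in `S` still spans. -/
theorem exists_basis_sdiff_spanning (f : ι → V) {h : ℕ} (hh : 1 ≤ h)
    (hβ : 1 ≤ Module.finrank F V) (S : Finset ι)
    (hz : ∀ T ⊆ S, (∀ i ∈ T, f i = 0) → T.card ≤ h - 1)
    (hsp : ∀ T ⊆ S, h + Module.finrank F V ≤ T.card →
      Submodule.span F (f '' (T : Set ι)) = ⊤)
    (hS : h + 2 * Module.finrank F V - 1 ≤ S.card) :
    ∃ B ⊆ S, B.card = Module.finrank F V ∧ Submodule.span F (f '' (B : Set ι)) = ⊤ ∧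
      Submodule.span F (f '' ((S \ B : Finset ι) : Set ι)) = ⊤ := by
  obtain ⟨B, hBS, -, hBsp, hBi⟩ := exists_finset_indep_extension (F := F) f (s := ∅) (S := S)
    (by simp) (by simp)
  rw [hsp S subset_rfl (by omega), top_le_iff] at hBsp
  have hBc := card_eq_finrank_of_basis hBi hBsp
  have hCc : (S \ B).card = S.card - B.card := Finset.card_sdiff_of_subset hBS
  by_cases hC : Submodule.span F (f '' ((S \ B : Finset ι) : Set ι)) = ⊤
  · exact ⟨B, hBS, hBc, hBsp, hC⟩
  obtain ⟨I, hIC, -, hIsp, hIi⟩ := exists_finset_indep_extension (F := F) f (s := ∅) (S := S \ B)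
    (by simp) (by simp)
  have hIc : I.card < Module.finrank F V := by
    have hle := finrank_span_eq_card (R := F) (b := fun x : (I : Set ι) => f x) hIi
    rw [← Set.image_eq_range] at hle
    have hne : Submodule.span F (f '' (I : Set ι)) ≠ ⊤ := fun h => hC <| top_le_iff.1 <|
      h ▸ Submodule.span_mono (Set.image_mono (Finset.coe_subset.2 hIC))
    have := Submodule.finrank_lt hne
    rw [hle] at this
    simpa using this
  obtain ⟨c, hc, hc0⟩ : ∃ c ∈ (S \ B) \ I, f c ≠ 0 := by
    by_contra! hcon
    have h1 := hz ((S \ B) \ I) (Finset.sdiff_subset.trans Finset.sdiff_subset) hcon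
    rw [Finset.card_sdiff_of_subset hIC] at h1
    omega
  simp only [Finset.mem_sdiff] at hc
  obtain ⟨⟨hcS, hcB⟩, hcI⟩ := hc
  obtain ⟨B', hB', hcB', hB'sp, hB'i⟩ := exists_finset_indep_extension (F := F) f (s := {c})
    (S := insert c B) (by simpa using hc0) (by simp)
  have hB'top : Submodule.span F (f '' (B' : Set ι)) = ⊤ := by
    rw [← top_le_iff, ← hBsp]
    exact (Submodule.span_mono (Set.image_mono (by simp))).trans hB'sp
  have hB'c := card_eq_finrank_of_basis hB'i hB'top
  obtain ⟨b, hbB, hbB'⟩ : ∃ b ∈ B, b ∉ B' := by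
    by_contra! hcon
    have := Finset.card_le_card (Finset.insert_subset (hcB' (Finset.mem_singleton_self c)) hcon)
    rw [Finset.card_insert_of_notMem hcB] at this
    omega
  refine ⟨B', hB'.trans (Finset.insert_subset hcS hBS), hB'c, hB'top, ?_⟩
  have hbC : b ∉ S \ B := by simp [hbB]
  have htop := hsp (insert b (S \ B)) (Finset.insert_subset (hBS hbB) Finset.sdiff_subset)
    (by rw [Finset.card_insert_of_notMem hbC]; omega)
  rw [← top_le_iff, ← htop, Submodule.span_le]
  have hI : (I : Set ι) ⊆ ((S \ B' : Finset ι) : Set ι) := by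
    intro i hi
    have h1 := Finset.mem_sdiff.1 (hIC hi)
    refine Finset.mem_coe.2 (Finset.mem_sdiff.2 ⟨h1.1, fun h2 => ?_⟩)
    rcases Finset.mem_insert.1 (hB' h2) with rfl | h3
    · exact hcI hi
    · exact h1.2 h3
  rintro _ ⟨i, hi, rfl⟩
  rcases Finset.mem_insert.1 (Finset.mem_coe.1 hi) with rfl | hi
  · exact Submodule.subset_span ⟨i, by simp [hBS hbB, hbB'], rfl⟩
  · exact Submodule.span_mono (Set.image_mono hI) (hIsp (Submodule.subset_span ⟨i, hi, rfl⟩))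

/-- Greedy partition of `h + (n + 1) dim V - 1` vectors into spanning blocks. Spanning of `S` itself
is a separate hypothesis since for `n = 0` it does not follow from `hsp`. -/
theorem exists_spanning_partition (f : ι → V) {h : ℕ} (hh : 1 ≤ h)
    (hβ : 1 ≤ Module.finrank F V) (n : ℕ) (S : Finset ι)
    (hz : ∀ T ⊆ S, (∀ i ∈ T, f i = 0) → T.card ≤ h - 1)
    (hsp : ∀ T ⊆ S, h + Module.finrank F V ≤ T.card →
      Submodule.span F (f '' (T : Set ι)) = ⊤)
    (hS : S.card = h + (n + 1) * Module.finrank F V - 1)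
    (hStop : Submodule.span F (f '' (S : Set ι)) = ⊤) :
    ∃ R : Fin (n + 1) → Finset ι, (∀ i j, i ≠ j → Disjoint (R i) (R j)) ∧
      Finset.univ.biUnion R = S ∧ (R 0).card = h + Module.finrank F V - 1 ∧
      (∀ i, i ≠ 0 → (R i).card = Module.finrank F V) ∧
      ∀ i, Submodule.span F (f '' (R i : Set ι)) = ⊤ := by
  induction n generalizing S with
  | zero =>
    refine ⟨fun _ => S, fun i j hij => (hij (by lia)).elim, by simp, ?_,
      fun i hi => (hi (by lia)).elim, fun _ => hStop⟩
    simpa using hS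
  | succ n ih =>
    have hS' : h + 2 * Module.finrank F V - 1 ≤ S.card := by
      rw [hS]
      have : 2 * Module.finrank F V ≤ (n + 1 + 1) * Module.finrank F V :=
        Nat.mul_le_mul_right _ (by omega)
      omega
    obtain ⟨B, hBS, hBc, hBsp, hCsp⟩ := exists_basis_sdiff_spanning f hh hβ S hz hsp hS'
    have hsub : S \ B ⊆ S := Finset.sdiff_subset
    obtain ⟨R, hd, hu, h0, hc, hR⟩ := ih (S \ B) (fun T hT => hz T (hT.trans hsub))
      (fun T hT => hsp T (hT.trans hsub))
      (by rw [Finset.card_sdiff_of_subset hBS, hS, hBc, Nat.succ_mul (n + 1)]; omega) hCsp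
    have hRB : ∀ i, Disjoint (R i) B := fun i =>
      Finset.sdiff_disjoint.mono_left (hu ▸ Finset.subset_biUnion_of_mem R (Finset.mem_univ i))
    refine ⟨Fin.snoc (α := fun _ => Finset ι) R B, ?_, ?_, ?_, ?_, ?_⟩
    · intro i j
      induction i using Fin.lastCases with
      | last =>
        induction j using Fin.lastCases with
        | last => simp
        | cast j => simpa using fun _ => (hRB j).symm
      | cast i =>
        induction j using Fin.lastCases with
        | last => simpa using hRB i
        | cast j => simpa using hd i j
    · rw [← Finset.sdiff_union_of_subset hBS, ← hu]
      ext x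
      simp [Fin.exists_fin_succ']
    · simpa using h0
    · intro i
      induction i using Fin.lastCases with
      | last => simpa using hBc
      | cast i => simpa using hc i
    · intro i
      induction i using Fin.lastCases with
      | last => simpa using hBsp
      | cast i => simpa using hR i

end

theorem rank_submatrix_eq_iff_span_rows {F ι : Type*} [Field F] {β : ℕ}
    (E : Matrix ι (Fin β) F) (R : Finset ι) :
    (E.submatrix (fun x : R => (x : ι)) id).rank = β ↔
      Submodule.span F (E.row '' (R : Set ι)) = ⊤ := by
  have hr : Set.range (E.submatrix (fun x : R => (x : ι)) id).row = E.row '' (R : Set ι) := by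
    ext y
    simp only [Set.mem_range, Subtype.exists]
    exact ⟨fun ⟨a, h, e⟩ => ⟨a, h, e⟩, fun ⟨a, h, e⟩ => ⟨a, h, e⟩⟩
  rw [Matrix.rank_eq_finrank_span_row, hr]
  constructor
  · intro h
    exact Submodule.eq_top_of_finrank_eq (by simpa using h)
  · intro h
    rw [h, finrank_top, Module.finrank_fin_fun]

/-- A `(h + 2βv - β - 1) × β` matrix of full column rank, with at most `h - 1` zero
rows, and such that every `h + β` rows have full column rank, can be partitioned
row-wise into `2v - 1` full-column-rank submatrices, the first with `h + β - 1` rows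
and the others with `β` rows each. -/
theorem stmt9 {F : Type*} [Field F] {h β v : ℕ}
    (hh : 1 ≤ h) (hβ : 1 ≤ β) (hv : 1 ≤ v)
    (E : Matrix (Fin (h + 2 * β * v - β - 1)) (Fin β) F)
    (h1 : E.rank = β)
    (h2 : {i : Fin (h + 2 * β * v - β - 1) | ∀ j, E i j = 0}.ncard ≤ h - 1)
    (h3 : ∀ R : Finset (Fin (h + 2 * β * v - β - 1)), R.card = h + β →
      (E.submatrix (fun i : R => (i : Fin (h + 2 * β * v - β - 1))) id).rank = β) :
    ∃ R : Fin (2 * v - 1) → Finset (Fin (h + 2 * β * v - β - 1)),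
      (∀ i j, i ≠ j → Disjoint (R i) (R j)) ∧
      (Finset.univ.biUnion R = Finset.univ) ∧
      (R ⟨0, by omega⟩).card = h + β - 1 ∧
      (∀ i, i ≠ ⟨0, by omega⟩ → (R i).card = β) ∧
      (∀ i, (E.submatrix (fun x : R i => (x : Fin (h + 2 * β * v - β - 1))) id).rank = β) := by
  classical
  obtain ⟨w, rfl⟩ : ∃ w, v = w + 1 := ⟨v - 1, by omega⟩
  have hfr : Module.finrank F (Fin β → F) = β := Module.finrank_fin_fun F
  have hmul : (2 * w + 1) * β + β = 2 * β * (w + 1) := by ring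
  simp only [rank_submatrix_eq_iff_span_rows] at h3 ⊢
  have key := exists_spanning_partition (F := F) E.row hh (by rwa [hfr]) (2 * w) Finset.univ
    ?_ ?_ ?_ ?_
  · rw [hfr] at key
    exact key
  · intro T _ hT
    refine le_trans ?_ h2
    rw [← Set.ncard_coe_finset]
    exact Set.ncard_le_ncard (fun i hi j => congrFun (hT i hi) j) (Set.toFinite _)
  · intro T _ hT
    rw [hfr] at hT
    obtain ⟨U, hUT, hU⟩ := Finset.exists_subset_card_eq hT
    rw [← top_le_iff, ← h3 U hU]
    exact Submodule.span_mono (Set.image_mono (Finset.coe_subset.2 hUT))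
  · rw [hfr, Finset.card_univ, Fintype.card_fin]
    omega
  · rw [Finset.coe_univ, Set.image_univ]
    refine Submodule.eq_top_of_finrank_eq ?_
    rw [hfr]
    exact (Matrix.rank_eq_finrank_span_row E).symm.trans h1
end

section
/- (Converse, region N ≥ K + 2β(v−1).) Let F be a finite field, let K = h + β with h ≥ 1 and 1 ≤ β < K, let v ≥ 1, let N ≥ K + 2β(v−1), and set t = K + 2β(v−1) − 1. Let G be any N × K matrix over F that is MDS (every K × K submatrix of G is invertible). Then there exist a subset T ⊆ Fin N with |T| = t, a subset A ⊆ Fin K with |A| = β, and two families x, z : T → (Fin K → F) such that: (a) for every k ∉ A, both n ↦ x_n(k) and n ↦ z_n(k) are constant on T; (b) for every k ∈ A, both sets {x_n(k) : n ∈ T} and {z_n(k) : n ∈ T} have at most v elements; (c) Σ_{k ∈ Fin K} G_{n,k} · x_n(k) = Σ_{k ∈ Fin K} G_{n,k} · z_n(k) for every n ∈ T; and (d) there exists k ∉ A with x_n(k) ≠ z_n(k) (for the common constant values). Hence no linear t-correct code exists with t < K + 2β(v−1) in this region. -/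
/-!
Take the last `β` sources as adversaries and colour the nodes of `T` with `2v - 1` colours. If
every adversarial source follows a prescribed difference `d c` on the nodes of colour `c`, the
requirement that `x` and `z` have the same coded symbols is a homogeneous linear system with
`h + β(2v-1)` unknowns (the `h` honest differences and `β` adversarial differences per colour) and
`t = h + β(2v-1) - 1` equations, so it has a nonzero solution.

The honest part of that solution is nonzero as soon as, for each colour, the rows of that colour
restricted to the adversarial columns have trivial kernel. Such a colouring is built greedily
(`exists_coloring`): any `K` rows of an MDS matrix have full column rank, so any `K` unused rows
contain `β` rows of rank `β` on the adversarial columns (`exists_block`), and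
`N ≥ K + 2β(v-1)` leaves at least `K` unused rows for each of the `2v - 1` colours.

Finally `2v - 1` arbitrary differences are realised with only `v` values on each side, because a
tree with `v + v` vertices has `2v - 1` edges. The tree used here is a double star: `x` takes the
values `d 0, …, d (v-1)` and `z` takes the values `d 0 - d c` for `c = 0` or `v ≤ c ≤ 2v-2`.
-/

/-- An `N × K` matrix is MDS if every `K × K` submatrix (any `K` rows, chosen
injectively) is invertible. -/
def IsMDSMatrix {F : Type*} [Field F] {N K : ℕ} (G : Matrix (Fin N) (Fin K) F) : Prop :=
  ∀ g : Fin K → Fin N, Function.Injective g → IsUnit (G.submatrix g id)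

/-- Any `h + β` rows of an MDS matrix have trivial kernel on the last `β` columns. -/
lemma adversarial_kernel_trivial {F : Type*} [Field F] {N h β : ℕ}
    (G : Matrix (Fin N) (Fin (h + β)) F) (hG : IsMDSMatrix G)
    (R : Finset (Fin N)) (hR : h + β ≤ R.card) (u : Fin β → F)
    (hu : ∀ n ∈ R, ∑ k, G n (Fin.natAdd h k) * u k = 0) : u = 0 := by
  obtain ⟨R', hR', hc⟩ := Finset.exists_subset_card_eq hR
  let g : Fin (h + β) → Fin N := R'.orderEmbOfFin hc
  have hunit := hG g (R'.orderEmbOfFin hc).injective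
  have hinj := Matrix.mulVec_injective_of_isUnit hunit
  -- Padding `u` by zeros on the honest columns gives a kernel vector of the square submatrix.
  have h0 : Fin.append (0 : Fin h → F) u = 0 := by
    apply hinj
    funext i
    have := hu (g i) (hR' (Finset.orderEmbOfFin_mem R' hc i))
    simpa [Matrix.mulVec, dotProduct, Fin.sum_univ_add] using this
  funext k
  simpa using congrFun h0 (Fin.natAdd h k)

/-- Any `h + β` rows of an MDS matrix contain `β` rows with trivial kernel on the last `β`
columns. -/
lemma exists_block {F : Type*} [Field F] {N h β : ℕ}
    (G : Matrix (Fin N) (Fin (h + β)) F) (hG : IsMDSMatrix G)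
    (R : Finset (Fin N)) (hR : h + β ≤ R.card) :
    ∃ P ⊆ R, P.card = β ∧ ∀ u : Fin β → F,
      (∀ n ∈ P, ∑ k, G n (Fin.natAdd h k) * u k = 0) → u = 0 := by
  classical
  let w : {n // n ∈ R} → (Fin β → F) := fun n k => G n.1 (Fin.natAdd h k)
  obtain ⟨κ, a, ha, hspan, hli⟩ := exists_linearIndependent' F w
  have : Finite κ := Finite.of_injective a ha
  have := Fintype.ofFinite κ
  have hcard : Fintype.card κ ≤ β := by
    simpa using hli.fintype_card_le_finrank
  let P₀ : Finset (Fin N) := Finset.univ.image fun i => (a i).1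
  have hP₀R : P₀ ⊆ R := by
    intro n hn
    obtain ⟨i, -, rfl⟩ := Finset.mem_image.1 hn
    exact (a i).2
  have hP₀c : P₀.card ≤ β := Finset.card_image_le.trans (by simpa using hcard)
  obtain ⟨P, hP₀P, hPR, hPc⟩ := Finset.exists_subsuperset_card_eq hP₀R hP₀c (by omega)
  refine ⟨P, hPR, hPc, fun u hu => adversarial_kernel_trivial G hG R hR u fun n hn => ?_⟩
  let φ : (Fin β → F) →ₗ[F] F := Fintype.linearCombination F u
  have hφ : ∀ y, φ y = ∑ k, y k * u k := fun y => by
    simp [φ, Fintype.linearCombination_apply]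
  have hle : Submodule.span F (Set.range (w ∘ a)) ≤ LinearMap.ker φ := by
    rw [Submodule.span_le]
    rintro _ ⟨i, rfl⟩
    have := hu (a i).1 (hP₀P (Finset.mem_image_of_mem _ (Finset.mem_univ i)))
    simpa [hφ, w] using this
  have hmem : w ⟨n, hn⟩ ∈ LinearMap.ker φ := by
    apply hle
    rw [hspan]
    exact Submodule.subset_span ⟨_, rfl⟩
  simpa [hφ, w] using hmem

/-- Among `m * β` suitable rows, each of the `m` colours `j < m` has trivial kernel on the last
`β` columns. The colouring is total on all rows; for `m = 0` its only colour is `0`. -/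
lemma exists_coloring {F : Type*} [Field F] {N h β : ℕ}
    (G : Matrix (Fin N) (Fin (h + β)) F) (hG : IsMDSMatrix G)
    (m : ℕ) (hm : h + m * β ≤ N) :
    ∃ S : Finset (Fin N), S.card = m * β ∧ ∃ c : Fin N → ℕ, (∀ n, c n ≤ m - 1) ∧
      ∀ j < m, ∀ u : Fin β → F,
        (∀ n ∈ S, c n = j → ∑ k, G n (Fin.natAdd h k) * u k = 0) → u = 0 := by
  classical
  induction m with
  | zero => exact ⟨∅, by simp, fun _ => 0, by simp, by simp⟩
  | succ m ih =>
    rw [add_mul, one_mul] at hm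
    obtain ⟨S, hS, c, hc, hker⟩ := ih (by omega)
    obtain ⟨P, hP, hPc, hPker⟩ := exists_block G hG Sᶜ (by
      rw [Finset.card_compl, hS, Fintype.card_fin]; omega)
    have hdisj : Disjoint S P := by
      rw [Finset.disjoint_right]
      intro n hn
      simpa using hP hn
    refine ⟨S ∪ P, by rw [Finset.card_union_of_disjoint hdisj, hS, hPc]; ring,
      fun n => if n ∈ P then m else c n, fun n => ?_, fun j hj u hu => ?_⟩
    · have := hc n
      dsimp only
      split_ifs <;> omega
    · rcases Nat.lt_succ_iff_lt_or_eq.1 hj with hj | rfl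
      · refine hker j hj u fun n hn hcn => hu n (Finset.mem_union_left _ hn) ?_
        dsimp only
        rw [if_neg (Finset.disjoint_left.1 hdisj hn), hcn]
      · exact hPker u fun n hn => hu n (Finset.mem_union_right _ hn) (if_pos hn)

/-- Converse for the region `N ≥ K + 2β(v-1)`: for `t = K + 2β(v-1) - 1`, any MDS
generator matrix admits a set `T` of `t` encoding nodes, an adversary set `A` of size
`β`, and two `(β,v)`-adversarial assignments `x, z` on `T` producing the same coded
symbols but differing in the message of some honest source. -/
theorem stmt12 {F : Type*} [Field F] [Fintype F] {N h β v : ℕ}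
    (hh : 1 ≤ h) (hβ : 1 ≤ β) (hβK : β < h + β) (hv : 1 ≤ v)
    (hN : h + β + 2 * β * (v - 1) ≤ N)
    (G : Matrix (Fin N) (Fin (h + β)) F) (hG : IsMDSMatrix G) :
    ∃ T : Finset (Fin N), T.card = h + β + 2 * β * (v - 1) - 1 ∧
    ∃ A : Finset (Fin (h + β)), A.card = β ∧
    ∃ x z : {n // n ∈ T} → (Fin (h + β) → F),
      (∀ k, k ∉ A → (∀ n m, x n k = x m k) ∧ (∀ n m, z n k = z m k)) ∧
      (∀ k ∈ A, (Set.range fun n => x n k).ncard ≤ v ∧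
                (Set.range fun n => z n k).ncard ≤ v) ∧
      (∀ n : {n // n ∈ T}, ∑ k, G n.1 k * x n k = ∑ k, G n.1 k * z n k) ∧
      (∃ k, k ∉ A ∧ ∀ n, x n k ≠ z n k) := by
  classical
  obtain ⟨r, rfl⟩ : ∃ r, v = r + 1 := ⟨v - 1, by omega⟩
  rw [Nat.add_sub_cancel] at hN ⊢
  have hexp : (2 * r + 1) * β = β + 2 * β * r := by ring
  obtain ⟨S, hS, c, hc, hker⟩ := exists_coloring G hG (2 * r + 1) (by omega)
  obtain ⟨T, hST, -, hT⟩ := Finset.exists_subsuperset_card_eq (Finset.subset_univ S)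
    (n := h + β + 2 * β * r - 1) (by omega) (by simp; omega)
  have hcol : ∀ n, c n < 2 * r + 1 := fun n => by have := hc n; omega
  -- The unknowns are the honest differences and the adversarial differences of each colour.
  let L : ((Fin h → F) × (Fin (2 * r + 1) × Fin β → F)) →ₗ[F] ({n // n ∈ T} → F) :=
    { toFun := fun p n => ∑ k, G n.1 (Fin.castAdd β k) * p.1 k +
        ∑ k, G n.1 (Fin.natAdd h k) * p.2 (⟨c n.1, hcol n.1⟩, k)
      map_add' := fun p q => by
        funext n
        simp only [Prod.fst_add, Prod.snd_add, Pi.add_apply, mul_add, Finset.sum_add_distrib]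
        ring
      map_smul' := fun s p => by
        funext n
        simp only [Prod.smul_fst, Prod.smul_snd, Pi.smul_apply, smul_eq_mul, RingHom.id_apply,
          mul_add, Finset.mul_sum, mul_left_comm] }
  have hLker : LinearMap.ker L ≠ ⊥ := by
    apply LinearMap.ker_ne_bot_of_finrank_lt
    simp only [Module.finrank_prod, Module.finrank_fintype_fun_eq_card, Fintype.card_prod,
      Fintype.card_fin, Fintype.card_coe, hT]
    omega
  obtain ⟨⟨p, d⟩, hpd, hne⟩ := Submodule.exists_mem_ne_zero_of_ne_bot hLker
  have hL : ∀ n : {n // n ∈ T}, ∑ k, G n.1 (Fin.castAdd β k) * p k +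
      ∑ k, G n.1 (Fin.natAdd h k) * d (⟨c n.1, hcol n.1⟩, k) = 0 :=
    fun n => congrFun (LinearMap.mem_ker.1 hpd) n
  have hp : p ≠ 0 := by
    rintro rfl
    apply hne
    have hd : d = 0 := by
      funext ⟨j, k⟩
      have := hker j.1 j.2 (fun k => d (j, k)) fun n hn hcn => by
        have h1 := hL ⟨n, hST hn⟩
        have h2 : (⟨c n, hcol n⟩ : Fin (2 * r + 1)) = j := Fin.ext hcn
        simpa [h2] using h1
      exact congrFun this k
    rw [hd]; rfl
  obtain ⟨k₀, hk₀⟩ := Function.ne_iff.1 hp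
  -- The colour-`j` edge of the double star joins `x`-vertex `a j` to `z`-vertex `b j`.
  let D : ℕ → Fin β → F := fun j k => if hj : j < 2 * r + 1 then d (⟨j, hj⟩, k) else 0
  let a : ℕ → ℕ := fun j => if j < r + 1 then j else 0
  let b : ℕ → ℕ := fun j => if j < r + 1 then 0 else j
  have hab : ∀ j k, D (a j) k - (D 0 k - D (b j) k) = D j k := by
    intro j k
    dsimp only [a, b]
    split_ifs <;> ring
  refine ⟨T, hT, Finset.univ.map (Fin.natAddEmb h), by simp,
    fun n => Fin.append p (fun k => D (a (c n.1)) k),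
    fun n => Fin.append 0 (fun k => D 0 k - D (b (c n.1)) k), ?_, ?_, ?_, ?_⟩
  · intro k hk
    induction k using Fin.addCases with
    | left i => simp
    | right i => exact absurd (by simp) hk
  · intro k hk
    induction k using Fin.addCases with
    | left i =>
      obtain ⟨i', -, hi'⟩ := Finset.mem_map.1 hk
      have := congrArg Fin.val hi'
      simp at this
      omega
    | right i =>
      simp only [Fin.append_right]
      constructor
      · have hsub : (Set.range fun n : {n // n ∈ T} => D (a (c n.1)) i) ⊆
            ((Finset.range (r + 1)).image fun j => D j i : Finset F) := by
          rintro _ ⟨n, rfl⟩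
          refine Finset.mem_coe.2 (Finset.mem_image_of_mem (fun j => D j i) ?_)
          simp only [a, Finset.mem_range]
          split_ifs <;> omega
        refine (Set.ncard_le_ncard hsub).trans ?_
        rw [Set.ncard_coe_finset]
        exact Finset.card_image_le.trans (by simp)
      · have hsub : (Set.range fun n : {n // n ∈ T} => D 0 i - D (b (c n.1)) i) ⊆
            ((insert 0 (Finset.Ico (r + 1) (2 * r + 1))).image fun j => D 0 i - D j i :
              Finset F) := by
          rintro _ ⟨n, rfl⟩
          refine Finset.mem_coe.2 (Finset.mem_image_of_mem (fun j => D 0 i - D j i) ?_)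
          have := hcol n.1
          simp only [b, Finset.mem_insert, Finset.mem_Ico]
          split_ifs <;> omega
        refine (Set.ncard_le_ncard hsub).trans ?_
        rw [Set.ncard_coe_finset]
        refine Finset.card_image_le.trans ((Finset.card_insert_le _ _).trans ?_)
        rw [Nat.card_Ico]
        omega
  · intro n
    rw [← sub_eq_zero, ← Finset.sum_sub_distrib]
    simp only [← mul_sub, Fin.sum_univ_add, Fin.append_left, Fin.append_right, Pi.zero_apply,
      sub_zero, hab]
    simpa only [D, dif_pos (hcol n.1)] using hL n
  · refine ⟨Fin.castAdd β k₀, ?_, fun n => by simpa using hk₀⟩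
    intro hk
    obtain ⟨i, -, hi⟩ := Finset.mem_map.1 hk
    have := congrArg Fin.val hi
    simp at this
    omega
end

section
/- (Converse, region K ≤ N < K + 2β(v−1).) Let F be a finite field, let K = h + β with h ≥ 1 and 1 ≤ β < K, let v ≥ 1, and let K ≤ N < K + 2β(v−1). Let G be any N × K matrix over F that is MDS (every K × K submatrix of G is invertible). Then there exist a subset T ⊆ Fin N with |T| = N − 1, a subset A ⊆ Fin K with |A| = β, and two families x, z : T → (Fin K → F) such that: (a) for every k ∉ A, both n ↦ x_n(k) and n ↦ z_n(k) are constant on T; (b) for every k ∈ A, both sets {x_n(k) : n ∈ T} and {z_n(k) : n ∈ T} have at most v elements; (c) Σ_{k} G_{n,k} · x_n(k) = Σ_{k} G_{n,k} · z_n(k) for every n ∈ T; and (d) there exists k ∉ A with x_n(k) ≠ z_n(k). Hence in this region any linear t-correct code requires t = N. -/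
/-- If each of `m` finite sets has at least `m` elements, they have distinct representatives. -/
lemma exists_injective_mem_of_card_le {α : Type*} {m : ℕ} (S : Fin m → Finset α)
    (hS : ∀ j, m ≤ (S j).card) : ∃ f : Fin m → α, Function.Injective f ∧ ∀ j, f j ∈ S j := by
  classical
  rw [← Finset.all_card_le_biUnion_card_iff_exists_injective]
  intro s
  rcases s.eq_empty_or_nonempty with rfl | ⟨j, hj⟩
  · simp
  · calc s.card ≤ m := by simpa using s.card_le_univ
      _ ≤ (S j).card := hS j
      _ ≤ _ := Finset.card_le_card (Finset.subset_biUnion_of_mem S hj)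

/-- A column with `K` zeros would give a singular `K × K` submatrix. -/
lemma le_card_column_support {F : Type*} [Field F] [DecidableEq F] {N K : ℕ}
    {G : Matrix (Fin N) (Fin K) F} (hG : IsMDSMatrix G) (k : Fin K) :
    N - K ≤ (Finset.univ.filter fun n => G n k ≠ 0).card := by
  by_contra! hlt
  have hsum := Finset.card_filter_add_card_filter_not (s := (Finset.univ : Finset (Fin N)))
    (fun n => G n k = 0)
  rw [Finset.card_univ, Fintype.card_fin] at hsum
  obtain ⟨Z, hZ, hZc⟩ := Finset.exists_subset_card_eq
    (s := Finset.univ.filter fun n => G n k = 0) (n := K) (by simp only [ne_eq] at hlt; omega)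
  have hu := hG (Z.orderEmbOfFin hZc) (Z.orderEmbOfFin hZc).injective
  rw [Matrix.isUnit_iff_isUnit_det, Matrix.det_eq_zero_of_column_eq_zero k] at hu
  · simp at hu
  · intro i
    exact (Finset.mem_filter.1 (hZ (Z.orderEmbOfFin_mem hZc i))).2

/-- A function equal to `c` off at most `v - 1` exceptional points, indexed by `J`, takes at most
`v` values. -/
lemma ncard_range_le_of_exceptions {ι κ α : Type*} {v : ℕ} (hv : 1 ≤ v) (f : ι → α) (c : α)
    (J : Finset κ) (hJ : J.card ≤ v - 1) (w : κ → α)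
    (hf : ∀ n, f n = c ∨ ∃ j ∈ J, f n = w j) : (Set.range f).ncard ≤ v := by
  classical
  have hsub : Set.range f ⊆ ↑(insert c (J.image w)) := by
    rintro _ ⟨n, rfl⟩
    rcases hf n with h | ⟨j, hj, h⟩
    · simp [h]
    · rw [h]
      exact Finset.mem_coe.2 (Finset.mem_insert_of_mem (Finset.mem_image_of_mem w hj))
  calc (Set.range f).ncard ≤ (↑(insert c (J.image w)) : Set α).ncard :=
        Set.ncard_le_ncard hsub (Finset.finite_toSet _)
    _ = (insert c (J.image w)).card := Set.ncard_coe_finset _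
    _ ≤ (J.image w).card + 1 := Finset.card_insert_le _ _
    _ ≤ J.card + 1 := by gcongr; exact Finset.card_image_le
    _ ≤ v := by omega

/-- Converse for the region `K ≤ N < K + 2β(v-1)`: any MDS generator matrix admits a
set `T` of `N - 1` encoding nodes, an adversary set `A` of size `β`, and two
`(β,v)`-adversarial assignments `x, z` on `T` producing the same coded symbols but
differing in the message of some honest source; hence `t = N` is required. -/
theorem stmt13 {F : Type*} [Field F] [Fintype F] {N h β v : ℕ}
    (hh : 1 ≤ h) (hβ : 1 ≤ β) (hβK : β < h + β) (hv : 1 ≤ v)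
    (hKN : h + β ≤ N) (hN : N < h + β + 2 * β * (v - 1))
    (G : Matrix (Fin N) (Fin (h + β)) F) (hG : IsMDSMatrix G) :
    ∃ T : Finset (Fin N), T.card = N - 1 ∧
    ∃ A : Finset (Fin (h + β)), A.card = β ∧
    ∃ x z : {n // n ∈ T} → (Fin (h + β) → F),
      (∀ k, k ∉ A → (∀ n m, x n k = x m k) ∧ (∀ n m, z n k = z m k)) ∧
      (∀ k ∈ A, (Set.range fun n => x n k).ncard ≤ v ∧
                (Set.range fun n => z n k).ncard ≤ v) ∧
      (∀ n : {n // n ∈ T}, ∑ k, G n.1 k * x n k = ∑ k, G n.1 k * z n k) ∧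
      (∃ k, k ∉ A ∧ ∀ n, x n k ≠ z n k) := by
  classical
  set m := N - (h + β) with hm
  obtain ⟨σ⟩ : Nonempty (Fin m ↪ Fin β × Bool × Fin (v - 1)) := by
    refine Function.Embedding.nonempty_of_card_le ?_
    have hslots : 2 * β * (v - 1) = β * (2 * (v - 1)) := by ring
    simp only [Fintype.card_fin, Fintype.card_prod, Fintype.card_bool]
    omega
  let a : Fin m → Fin (h + β) := fun j => Fin.natAdd h (σ j).1
  obtain ⟨ρ, hρ, hρa⟩ := exists_injective_mem_of_card_le
    (fun j => Finset.univ.filter fun n => G n (a j) ≠ 0)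
    (fun j => le_card_column_support hG (a j))
  replace hρa : ∀ j, G (ρ j) (a j) ≠ 0 := fun j => (Finset.mem_filter.1 (hρa j)).2
  have hRc : (Finset.univ.image ρ)ᶜ.card = h + β := by
    rw [Finset.card_compl, Finset.card_image_of_injective _ hρ]
    simp only [Fintype.card_fin, Finset.card_univ]
    omega
  let g := (Finset.univ.image ρ)ᶜ.orderEmbOfFin hRc
  have hg : ∀ n, (∀ j, ρ j ≠ n) → ∃ i, g i = n := by
    intro n hn
    have : n ∈ Set.range g := by
      rw [Finset.range_orderEmbOfFin]
      simpa using hn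
    exact this
  have hM := hG g g.injective
  set M := G.submatrix g id with hMdef
  have hMinv : M * M⁻¹ = 1 := Matrix.mul_nonsing_inv M ((Matrix.isUnit_iff_isUnit_det M).1 hM)
  let k₀ : Fin (h + β) := Fin.castAdd β ⟨0, hh⟩
  obtain ⟨r, hr⟩ : ∃ r, M⁻¹ k₀ r ≠ 0 := by
    by_contra! h0
    have h1 : (M⁻¹ * M) k₀ k₀ = 1 := by
      rw [Matrix.nonsing_inv_mul M ((Matrix.isUnit_iff_isUnit_det M).1 hM)]
      simp
    simp [Matrix.mul_apply, h0] at h1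
  let δ : Fin (h + β) → F := fun k => M⁻¹ k r
  have hδ : ∀ i, i ≠ r → ∑ k, G (g i) k * δ k = 0 := by
    intro i hi
    have := congrFun (congrFun hMinv i) r
    rw [Matrix.one_apply_ne hi, Matrix.mul_apply] at this
    exact this
  -- The change in coordinate `k` alone that cancels the residual of `δ` at node `n`.
  let y : Fin N → Fin (h + β) → F := fun n k => (∑ l, G n l * δ l) / G n k
  -- Node `n` is matched to a slot of source `k` on side `b`.
  let P : Bool → Fin N → Fin (h + β) → Prop := fun b n k =>
    ∃ j, ρ j = n ∧ a j = k ∧ (σ j).2.1 = b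
  have hJ : ∀ b k, (Finset.univ.filter fun j => a j = k ∧ (σ j).2.1 = b).card ≤ v - 1 := by
    intro b k
    calc _ ≤ (Finset.univ : Finset (Fin (v - 1))).card := by
          refine Finset.card_le_card_of_injOn (fun j => (σ j).2.2) (fun _ _ => by simp) ?_
          intro i hi j hj hij
          simp only [Finset.coe_filter, Finset.mem_univ, true_and, Set.mem_ofPred_eq] at hi hj
          refine σ.injective (Prod.ext ?_ (Prod.ext (hi.2.trans hj.2.symm) hij))
          exact Fin.natAdd_injective _ _ (hi.1.trans hj.1.symm)
      _ = v - 1 := by simp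
  have hP : ∀ b n k, k ∉ Finset.univ.image (Fin.natAdd h : Fin β → Fin (h + β)) → ¬ P b n k := by
    rintro b n k hk ⟨j, -, hj, -⟩
    exact hk (Finset.mem_image.2 ⟨(σ j).1, Finset.mem_univ _, hj⟩)
  refine ⟨Finset.univ.erase (g r), by simp, Finset.univ.image (Fin.natAdd h), ?_,
    fun n k => δ k - if P true n k then y n k else 0,
    fun n k => if P false n k then y n k else 0, ?_, ?_, ?_, k₀, ?_, ?_⟩
  · rw [Finset.card_image_of_injective _ (Fin.natAdd_injective _ _)]
    simp
  · intro k hk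
    simp [hP _ _ k hk]
  · intro k _
    constructor
    · refine ncard_range_le_of_exceptions hv _ (δ k) _ (hJ true k) (fun j => δ k - y (ρ j) k) ?_
      intro n
      by_cases h : P true n k
      · obtain ⟨j, hj, hja⟩ := id h
        exact Or.inr ⟨j, by simpa using hja, by simp only [if_pos h, hj]⟩
      · left; simp only [if_neg h, sub_zero]
    · refine ncard_range_le_of_exceptions hv _ 0 _ (hJ false k) (fun j => y (ρ j) k) ?_
      intro n
      by_cases h : P false n k
      · obtain ⟨j, hj, hja⟩ := id h
        exact Or.inr ⟨j, by simpa using hja, by simp only [if_pos h, hj]⟩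
      · left; simp only [if_neg h]
  · rintro ⟨n, hn⟩
    rw [← sub_eq_zero, ← Finset.sum_sub_distrib]
    by_cases hmatched : ∃ j, ρ j = n
    · obtain ⟨j, rfl⟩ := hmatched
      have hPj : ∀ b k, P b (ρ j) k ↔ a j = k ∧ (σ j).2.1 = b := by
        intro b k
        constructor
        · rintro ⟨i, hi, h⟩
          rwa [hρ hi] at h
        · exact fun h => ⟨j, rfl, h⟩
      have hterm : ∀ k, G (ρ j) k * (δ k - if P true (ρ j) k then y (ρ j) k else 0)
          - G (ρ j) k * (if P false (ρ j) k then y (ρ j) k else 0)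
          = G (ρ j) k * δ k - if a j = k then ∑ l, G (ρ j) l * δ l else 0 := by
        intro k
        simp only [hPj]
        by_cases hk : a j = k
        · subst hk
          have hy : G (ρ j) (a j) * y (ρ j) (a j) = ∑ l, G (ρ j) l * δ l :=
            mul_div_cancel₀ _ (hρa j)
          cases (σ j).2.1 <;> simp [mul_sub, hy]
        · simp [hk]
      simp only [hterm, Finset.sum_sub_distrib, Finset.sum_ite_eq, Finset.mem_univ, if_true,
        sub_self]
    · push Not at hmatched
      obtain ⟨i, rfl⟩ := hg n hmatched
      have hPn : ∀ b k, ¬ P b (g i) k := fun b k ⟨j, hj, _⟩ => hmatched j hj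
      have hir : i ≠ r := by
        rintro rfl
        simp at hn
      simpa [hPn] using hδ i hir
  · simp only [Finset.mem_image, Finset.mem_univ, true_and, not_exists]
    intro i hi
    have := congrArg Fin.val hi
    simp only [k₀, Fin.val_natAdd, Fin.val_castAdd] at this
    omega
  · intro n
    have hk₀ : ∀ b, ¬ P b n k₀ := by
      rintro b ⟨j, -, hj, -⟩
      have := congrArg Fin.val hj
      simp only [a, k₀, Fin.val_natAdd, Fin.val_castAdd] at this
      omega
    simpa [hk₀] using hr
end

section
/- (Achievability, region N ≥ K + 2β(v−1).) Let K = h + β with h ≥ 1 and β ≥ 1, let v ≥ 1, let N ≥ K + 2β(v−1), and set t = K + 2β(v−1). There exists a threshold q₀ ∈ ℕ (depending only on N, K, β, v) such that for every finite field F with |F| ≥ q₀ there exists an N × K matrix G over F that is MDS (every K × K submatrix is invertible) and satisfies the following correctness property: for every subset T ⊆ Fin N with |T| = t, every pair of adversary sets A, Â ⊆ Fin K with |A| ≤ β and |Â| ≤ β, and every pair of families x, z : T → (Fin K → F) such that x is constant in n on each k ∉ A and takes at most v values in n on each k ∈ A, z is constant in n on each k ∉ Â and takes at most v values in n on each k ∈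 Â, and Σ_k G_{n,k} · x_n(k) = Σ_k G_{n,k} · z_n(k) for all n ∈ T, one has x_n(k) = z_n(k) for every k ∉ A ∪ Â and every n ∈ T. In particular t*_linear ≤ K + 2β(v−1) in this region. -/
/-!
Subtracting the two assignments, one has to show that `d n k = x n k - z n k` vanishes for honest
`k` whenever `∑ k, G n k * d n k = 0` on `T`. Label the values taken by `x · k` and by `z · k` with
elements of `Fin v`. Then `d n k` is the value at the incidence vector
`e n k = δ (k, label of x) + δ (k, label of z)` of a linear functional, and the `e n k` with `n ∈ T`
span a space of dimension at most `K + 2β(v-1) = |T|` (`finrank_span_incidence_le`). They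
need not all be recoverable from the coded symbols, but a minimal nonempty `X ⊆ T` whose vectors
span dimension at most `|X|` spans dimension exactly `|X|` and satisfies Rado's condition
`|Y| ≤ dim span {e n k | n ∈ Y}` for all `Y ⊆ X` (`exists_tight_subset`). By Rado's theorem
(`exists_linearIndependent_transversal`) one can choose `c n` with `(e n (c n))_{n ∈ X}` linearly
independent, so a certain determinant of linear forms in the entries of `G` is a nonzero
polynomial, its value at the 0/1 matrix `G n k = [k = c n]` being 1. If it does not vanish at `G`,
then the combinations `∑ k, G n k • e n k`, `n ∈ X`, form a basis of the span of `X`, so `d`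
vanishes on `X`; for honest sources `d` is constant on `T`, hence vanishes on `T`.

Only finitely many labellings and MDS minors occur, in a number independent of the field, and each
gives a nonzero polynomial of degree at most `N`, so over a large field one `G` avoids all their
zero sets (`exists_eval_ne_zero`).
-/

open Finset Module in
/-- **Rado's theorem** for finite families of finite sets of vectors. The proof shrinks the sets
to singletons: if neither of two elements of `A n` could be deleted, submodularity of dimension
would be violated. -/
theorem exists_linearIndependent_transversal {F M ι : Type*} [Field F] [AddCommGroup M]
    [Module F M] [FiniteDimensional F M] [Fintype ι] [DecidableEq ι] [DecidableEq M]
    (A : ι → Finset M)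
    (hA : ∀ Y : Finset ι, Y.card ≤ finrank F (Submodule.span F (Y.biUnion A : Set M))) :
    ∃ w : ι → M, (∀ n, w n ∈ A n) ∧ LinearIndependent F w := by
  induction hs : ∑ n, (A n).card using Nat.strong_induction_on generalizing A with
  | _ s ih =>
  have hne : ∀ n, (A n).Nonempty := by
    intro n
    by_contra h
    rw [not_nonempty_iff_eq_empty] at h
    have := hA {n}
    simp [h] at this
  by_cases hone : ∀ n, (A n).card ≤ 1
  · choose w hw using hne
    refine ⟨w, hw, ?_⟩
    rw [linearIndependent_iff_card_le_finrank_span]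
    have h1 := hA univ
    have h2 : ((univ.biUnion A : Finset M) : Set M) ⊆ Set.range w := by
      intro m hm
      simp only [coe_biUnion, Set.mem_iUnion] at hm
      obtain ⟨n, -, hn⟩ := hm
      exact ⟨n, card_le_one.1 (hone n) _ (hw n) _ hn⟩
    exact h1.trans (Submodule.finrank_mono (Submodule.span_mono h2))
  · push Not at hone
    obtain ⟨n, hn⟩ := hone
    obtain ⟨a, ha, b, hb, hab⟩ := one_lt_card.1 hn
    have key : ∀ c ∈ A n,
        (∃ w : ι → M, (∀ n, w n ∈ A n) ∧ LinearIndependent F w) ∨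
        ∃ Y : Finset ι, n ∈ Y ∧ finrank F (Submodule.span F
          (Y.biUnion (Function.update A n ((A n).erase c)) : Set M)) < Y.card := by
      intro c hc
      set B := Function.update A n ((A n).erase c) with hB
      have hBA : ∀ i, B i ⊆ A i := by
        intro i
        by_cases hi : i = n
        · subst hi; simp [hB, erase_subset]
        · simp [hB, hi]
      by_cases h : ∀ Y : Finset ι, Y.card ≤ finrank F (Submodule.span F (Y.biUnion B : Set M))
      · left
        obtain ⟨w, hw, hl⟩ := ih (∑ i, (B i).card) (by
          rw [← hs]
          refine sum_lt_sum (fun i _ => card_le_card (hBA i)) ⟨n, mem_univ _, ?_⟩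
          simpa [hB] using card_erase_lt_of_mem hc) B h rfl
        exact ⟨w, fun i => hBA i (hw i), hl⟩
      · right
        push Not at h
        obtain ⟨Y, hY⟩ := h
        refine ⟨Y, ?_, hY⟩
        by_contra hnY
        have : Y.biUnion B = Y.biUnion A := by
          refine biUnion_congr rfl fun i hi => ?_
          have : i ≠ n := fun h => hnY (h ▸ hi)
          simp [hB, this]
        rw [this] at hY
        exact absurd (hA Y) (not_le.2 hY)
    rcases key a ha with h | ⟨Y, hnY, hY⟩
    · exact h
    rcases key b hb with h | ⟨Z, hnZ, hZ⟩
    · exact h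
    exfalso
    set P := Submodule.span F (Y.biUnion (Function.update A n ((A n).erase a)) : Set M)
    set Q := Submodule.span F (Z.biUnion (Function.update A n ((A n).erase b)) : Set M)
    have hP : ∀ i ∈ Y, ∀ m ∈ A i, (i = n → m ≠ a) → m ∈ P := by
      intro i hi m hm hma
      refine Submodule.subset_span ?_
      simp only [coe_biUnion, Set.mem_iUnion]
      refine ⟨i, hi, ?_⟩
      by_cases hin : i = n
      · subst hin; simp [hma rfl, hm]
      · simpa [hin] using hm
    have hQ : ∀ i ∈ Z, ∀ m ∈ A i, (i = n → m ≠ b) → m ∈ Q := by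
      intro i hi m hm hmb
      refine Submodule.subset_span ?_
      simp only [coe_biUnion, Set.mem_iUnion]
      refine ⟨i, hi, ?_⟩
      by_cases hin : i = n
      · subst hin; simp [hmb rfl, hm]
      · simpa [hin] using hm
    have hsup : Submodule.span F ((Y ∪ Z).biUnion A : Set M) ≤ P ⊔ Q := by
      rw [Submodule.span_le]
      intro m hm
      simp only [coe_biUnion, Set.mem_iUnion] at hm
      obtain ⟨i, hi, hm⟩ := hm
      have hm : m ∈ A i := hm
      by_cases hin : i = n
      · by_cases hma : m = a
        · exact Submodule.mem_sup_right
            (hQ i (hin ▸ hnZ) m hm fun _ h => hab (hma.symm.trans h))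
        · exact Submodule.mem_sup_left (hP i (hin ▸ hnY) m hm fun _ => hma)
      · rcases mem_union.1 hi with hi | hi
        · exact Submodule.mem_sup_left (hP i hi m hm fun h => absurd h hin)
        · exact Submodule.mem_sup_right (hQ i hi m hm fun h => absurd h hin)
    have hinf : Submodule.span F (((Y ∩ Z).erase n).biUnion A : Set M) ≤ P ⊓ Q := by
      rw [Submodule.span_le]
      intro m hm
      simp only [coe_biUnion, Set.mem_iUnion] at hm
      obtain ⟨i, hi, hm⟩ := hm
      have hi : i ∈ (Y ∩ Z).erase n := hi
      rw [mem_erase, mem_inter] at hi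
      exact ⟨hP i hi.2.1 m hm fun h => absurd h hi.1, hQ i hi.2.2 m hm fun h => absurd h hi.1⟩
    have e1 := (hA _).trans (Submodule.finrank_mono hsup)
    have e2 := (hA _).trans (Submodule.finrank_mono hinf)
    have e3 := Submodule.finrank_sup_add_finrank_inf_eq P Q
    have e4 := card_union_add_card_inter Y Z
    have e5 := card_erase_add_one (mem_inter.2 ⟨hnY, hnZ⟩)
    omega

open Finset Module in
/-- If the vectors `e n k`, `n ∈ T`, span dimension at most `|T|`, then some nonempty `X ⊆ T` is
tight and satisfies Rado's condition: take `X` minimal among nonempty sets spanning dimension at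
most their cardinality. -/
theorem exists_tight_subset {F M ι κ : Type*} [Field F] [AddCommGroup M] [Module F M]
    [FiniteDimensional F M] [DecidableEq ι] [Nonempty κ] (e : ι → κ → M)
    (he : ∀ n k, e n k ≠ 0) (T : Finset ι) (hT : T.Nonempty)
    (hr : finrank F (Submodule.span F {m | ∃ n ∈ T, ∃ k, e n k = m}) ≤ T.card) :
    ∃ X ⊆ T, X.Nonempty ∧ finrank F (Submodule.span F {m | ∃ n ∈ X, ∃ k, e n k = m}) = X.card ∧
      ∀ Y ⊆ X, Y.card ≤ finrank F (Submodule.span F {m | ∃ n ∈ Y, ∃ k, e n k = m}) := by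
  let r : Finset ι → ℕ := fun Y => finrank F (Submodule.span F {m | ∃ n ∈ Y, ∃ k, e n k = m})
  have hmono : ∀ {Y Z : Finset ι}, Y ⊆ Z → r Y ≤ r Z := fun h =>
    Submodule.finrank_mono (Submodule.span_mono fun m ⟨n, hn, k, hk⟩ => ⟨n, h hn, k, hk⟩)
  have hpos : ∀ Y : Finset ι, Y.Nonempty → 1 ≤ r Y := by
    rintro Y ⟨n, hn⟩
    obtain ⟨k⟩ := ‹Nonempty κ›
    refine Submodule.one_le_finrank_iff.2 fun h => he n k ?_
    exact (Submodule.eq_bot_iff _).1 h _ (Submodule.subset_span ⟨n, hn, k, rfl⟩)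
  obtain ⟨X, hX, hmin⟩ := exists_min_image (T.powerset.filter fun Y => Y.Nonempty ∧ r Y ≤ Y.card)
    card ⟨T, by simp only [mem_filter, mem_powerset]; exact ⟨Subset.refl _, hT, hr⟩⟩
  simp only [mem_filter, mem_powerset] at hX hmin
  obtain ⟨hXT, hXne, hXr⟩ := hX
  have hsmall : ∀ Y ⊆ X, Y ≠ X → Y.card ≤ r Y := by
    intro Y hY hYX
    by_contra hlt
    push Not at hlt
    have hYne : Y.Nonempty := card_pos.1 (by omega)
    have := hmin Y ⟨hY.trans hXT, hYne, hlt.le⟩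
    exact hYX (eq_of_subset_of_card_le hY this)
  have hfull : r X = X.card := by
    refine le_antisymm hXr ?_
    by_contra hlt
    push Not at hlt
    obtain ⟨n, hn⟩ := hXne
    have h1 := card_erase_add_one hn
    have h2 := hmono (erase_subset n X)
    have h3 := hpos X ⟨n, hn⟩
    have h4 := hmin (X.erase n) ⟨(erase_subset n X).trans hXT, card_pos.1 (by omega), by omega⟩
    omega
  refine ⟨X, hXT, hXne, hfull, fun Y hY => ?_⟩
  by_cases h : Y = X
  · subst h; exact hfull.ge
  · exact hsmall Y hY h

theorem totalDegree_det_le_card {F σ m : Type*} [Field F] [Fintype m] [DecidableEq m]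
    (B : Matrix m m (MvPolynomial σ F)) (hB : ∀ i j, (B i j).totalDegree ≤ 1) :
    B.det.totalDegree ≤ Fintype.card m := by
  rw [Matrix.det_apply]
  refine MvPolynomial.totalDegree_finsetSum_le fun τ _ => ?_
  refine (MvPolynomial.totalDegree_smul_le _ _).trans ?_
  refine (MvPolynomial.totalDegree_finsetProd _ _).trans ?_
  refine (Finset.sum_le_card_nsmul _ _ 1 fun i _ => hB _ _).trans ?_
  simp

/-- Over a field with more than `|I| * D` elements, finitely many nonzero polynomials `p i` of
degree at most `D` have a common non-root. -/
theorem exists_eval_ne_zero {F σ I : Type*} [Field F] [Fintype F] [Finite σ] [Fintype I]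
    (p : I → MvPolynomial σ F) (D : ℕ) (hp : ∀ i, p i ≠ 0) (hD : ∀ i, (p i).totalDegree ≤ D)
    (hF : Fintype.card I * D < Fintype.card F) :
    ∃ s : σ → F, ∀ i, MvPolynomial.eval s (p i) ≠ 0 := by
  classical
  by_contra! hcon
  have : ∏ i, p i = 0 := by
    refine MvPolynomial.eq_zero_of_eval_zero_at_prod_finset _ (fun _ => Finset.univ) ?_ ?_
    · intro j
      refine (MvPolynomial.degreeOf_le_totalDegree _ _).trans_lt ?_
      refine (MvPolynomial.totalDegree_finsetProd _ _).trans_lt ?_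
      refine (Finset.sum_le_card_nsmul _ _ D fun i _ => hD i).trans_lt ?_
      simpa using hF
    · intro s _
      obtain ⟨i, hi⟩ := hcon s
      rw [map_prod]
      exact Finset.prod_eq_zero (Finset.mem_univ i) hi
  obtain ⟨i, -, hi⟩ := Finset.prod_eq_zero_iff.1 this
  exact hp i hi

open Finset Module in
/-- For generic `G`, a functional killing all the combinations `∑ k, G n k • e n k`, `n ∈ T`, kills
every `e n k` for at least one `n ∈ T`, provided the `e n k` span dimension at most `|T|`. -/
theorem exists_poly_of_finrank_le {F M ι κ : Type*} [Field F] [AddCommGroup M] [Module F M]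
    [FiniteDimensional F M] [Fintype ι] [Fintype κ] [Nonempty κ] (e : ι → κ → M)
    (he : ∀ n k, e n k ≠ 0) (T : Finset ι) (hT : T.Nonempty)
    (hr : finrank F (Submodule.span F {m | ∃ n ∈ T, ∃ k, e n k = m}) ≤ T.card) :
    ∃ p : MvPolynomial (ι × κ) F, p ≠ 0 ∧ p.totalDegree ≤ Fintype.card ι ∧
      ∀ s : ι × κ → F, MvPolynomial.eval s p ≠ 0 →
        ∃ n ∈ T, ∀ l : M →ₗ[F] F, (∀ n ∈ T, ∑ k, s (n, k) * l (e n k) = 0) →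
          ∀ k, l (e n k) = 0 := by
  classical
  obtain ⟨X, hXT, ⟨n₀, hn₀⟩, hfull, hrado⟩ := exists_tight_subset e he T hT hr
  obtain ⟨w, hw, hwl⟩ := exists_linearIndependent_transversal (F := F)
    (fun n : X => univ.image (e n)) (by
      intro Y
      have h := hrado (Y.map (Function.Embedding.subtype _)) (by
        intro n hn
        obtain ⟨⟨a, ha⟩, -, rfl⟩ := mem_map.1 hn
        exact ha)
      rw [card_map] at h
      refine h.trans (Submodule.finrank_mono (Submodule.span_mono ?_))
      rintro m ⟨n, hn, k, rfl⟩
      obtain ⟨a, ha, rfl⟩ := mem_map.1 hn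
      simp only [coe_biUnion, Set.mem_iUnion]
      exact ⟨a, ha, by simp⟩)
  have hc : ∀ n : X, ∃ k, e n k = w n := fun n => by simpa using hw n
  choose c hc using hc
  -- `φ` sends the transversal `w` to the standard basis of `F^X`.
  obtain ⟨φ, hφ⟩ : ∃ φ : M →ₗ[F] (X → F), ∀ n : X, φ (w n) = Pi.single n 1 := by
    obtain ⟨φ, hφ⟩ := LinearMap.exists_leftInverse_of_injective (Fintype.linearCombination F w)
      (LinearMap.ker_eq_bot.2 (linearIndependent_iff_injective_fintypeLinearCombination.1 hwl))
    refine ⟨φ, fun n => ?_⟩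
    have := LinearMap.congr_fun hφ (Pi.single n 1)
    simpa [Fintype.linearCombination_apply_single] using this
  let B : Matrix X X (MvPolynomial (ι × κ) F) := Matrix.of fun n m =>
    ∑ k, MvPolynomial.X ((n : ι), k) * MvPolynomial.C (φ (e n k) m)
  have hB : ∀ s : ι × κ → F, MvPolynomial.eval s B.det =
      (Matrix.of fun (n m : X) => φ (∑ k, s ((n : ι), k) • e n k) m).det := by
    intro s
    rw [RingHom.map_det]
    congr 1
    ext n m
    simp [B]
  refine ⟨B.det, ?_, ?_, ?_⟩
  · intro h0
    let s : ι × κ → F := fun q => if h : q.1 ∈ X then (if q.2 = c ⟨q.1, h⟩ then 1 else 0) else 0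
    have h1 := hB s
    have h2 : (Matrix.of fun (n m : X) => φ (∑ k, s ((n : ι), k) • e n k) m) = 1 := by
      ext n m
      have : ∑ k, s ((n : ι), k) • e n k = w n := by simp [s, hc]
      rw [Matrix.of_apply, this, hφ, Matrix.one_apply, Pi.single_apply]
      simp only [eq_comm]
    rw [h0, h2] at h1
    simp at h1
  · refine (totalDegree_det_le_card _ fun n m => ?_).trans
      (Fintype.card_le_of_injective _ Subtype.val_injective)
    refine MvPolynomial.totalDegree_finsetSum_le fun k _ => ?_
    refine (MvPolynomial.totalDegree_mul _ _).trans ?_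
    simp
  · intro s hs
    rw [hB] at hs
    refine ⟨n₀, hXT hn₀, fun l hl k => ?_⟩
    set y : X → M := fun n => ∑ k, s ((n : ι), k) • e n k with hy
    have hyl : LinearIndependent F y :=
      LinearIndependent.of_comp φ (Matrix.linearIndependent_rows_of_det_ne_zero hs)
    have hle : Submodule.span F (Set.range y) ≤
        Submodule.span F {m | ∃ n ∈ X, ∃ k, e n k = m} := by
      rw [Submodule.span_le]
      rintro _ ⟨n, rfl⟩
      exact Submodule.sum_mem _ fun k _ => Submodule.smul_mem _ _
        (Submodule.subset_span ⟨n, n.2, k, rfl⟩)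
    have heq := Submodule.eq_of_le_of_finrank_eq hle (by
      rw [finrank_span_eq_card hyl, hfull]; simp)
    have hker : Submodule.span F (Set.range y) ≤ LinearMap.ker l := by
      rw [Submodule.span_le]
      rintro _ ⟨n, rfl⟩
      simpa [hy] using hl n (hXT n.2)
    rw [heq] at hker
    exact hker (Submodule.subset_span ⟨n₀, hn₀, k, rfl⟩)

/-- The vector of `F^(K × v × 2)` recording that source `k` carries its `i`-th value in the first
assignment (`true`) and its `j`-th value in the second one (`false`). -/
def incidence (F : Type) [Field F] {K v : ℕ} (k : Fin K) (i j : Fin v) :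
    Fin K × Fin v × Bool → F :=
  Pi.single (k, i, true) 1 + Pi.single (k, j, false) 1

theorem incidence_ne_zero (F : Type) [Field F] {K v : ℕ} (k : Fin K) (i j : Fin v) :
    incidence F k i j ≠ 0 := by
  intro h
  have := congrFun h (k, i, true)
  simp [incidence] at this

open Finset Module in
/-- Modulo the reference vector of source `k`, its incidence vectors are combinations of the
differences between a label and the reference label `i₀`, of which there are `v - 1` per
assignment and adversarial source. -/
theorem finrank_span_incidence_le (F : Type) [Field F] {ι : Type*} {K v : ℕ} (i₀ : Fin v)
    (T : Finset ι) (A A' : Finset (Fin K)) (a b : ι → Fin K → Fin v)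
    (ha : ∀ n ∈ T, ∀ k ∉ A, a n k = i₀) (hb : ∀ n ∈ T, ∀ k ∉ A', b n k = i₀) :
    finrank F (Submodule.span F {m | ∃ n ∈ T, ∃ k, incidence F k (a n k) (b n k) = m}) ≤
      K + A.card * (v - 1) + A'.card * (v - 1) := by
  classical
  let δ : Fin K → Bool → Fin v → (Fin K × Fin v × Bool → F) := fun k c i =>
    Pi.single (k, i, c) 1 - Pi.single (k, i₀, c) 1
  let S₀ : Finset (Fin K × Fin v × Bool → F) := univ.image fun k => incidence F k i₀ i₀
  let D : Bool → Finset (Fin K) → Finset (Fin K × Fin v × Bool → F) := fun c A =>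
    (A ×ˢ univ.erase i₀).image fun q => δ q.1 c q.2
  have hD : ∀ c A, (D c A).card ≤ A.card * (v - 1) := by
    intro c A
    refine card_image_le.trans ?_
    simp [card_product]
  have hcard : (S₀ ∪ D true A ∪ D false A').card ≤ K + A.card * (v - 1) + A'.card * (v - 1) := by
    have h1 := card_union_le (S₀ ∪ D true A) (D false A')
    have h2 := card_union_le S₀ (D true A)
    have h3 : S₀.card ≤ K := card_image_le.trans (by simp)
    have h4 := hD true A
    have h5 := hD false A'
    omega
  refine le_trans (Submodule.finrank_mono ?_)
    ((finrank_span_finset_le_card (R := F) (S₀ ∪ D true A ∪ D false A')).trans hcard)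
  rw [Submodule.span_le]
  rintro _ ⟨n, hn, k, rfl⟩
  have hδ : ∀ c (E : Finset (Fin K)) (i : Fin v), D c E ⊆ S₀ ∪ D true A ∪ D false A' →
      (k ∉ E → i = i₀) →
      δ k c i ∈ Submodule.span F ((S₀ ∪ D true A ∪ D false A' : Finset _) : Set _) := by
    intro c E i hsub hi
    by_cases h : i = i₀
    · simp [δ, h]
    · have hk : k ∈ E := by
        by_contra hk
        exact h (hi hk)
      refine Submodule.subset_span (hsub ?_)
      exact mem_image.2 ⟨(k, i), by simp [hk, h], rfl⟩
  have h0 : incidence F k i₀ i₀ ∈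
      Submodule.span F ((S₀ ∪ D true A ∪ D false A' : Finset _) : Set _) :=
    Submodule.subset_span (by simp [S₀])
  have h1 := hδ true A (a n k) (by grind) (ha n hn k)
  have h2 := hδ false A' (b n k) (by grind) (hb n hn k)
  have h3 : incidence F k (a n k) (b n k) =
      incidence F k i₀ i₀ + δ k true (a n k) + δ k false (b n k) := by
    simp only [incidence, δ]; abel
  rw [h3]
  exact Submodule.add_mem _ (Submodule.add_mem _ h0 h1) h2

/-- A family of values satisfying the `(β,v)` constraints is given by labels in `Fin v` and a
table of values, where honest sources only use the label `i₀`. -/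
theorem exists_labels {F ι κ : Type*} [Zero F] {v : ℕ} (i₀ : Fin v) (T : Finset ι)
    (A : Finset κ) (x : {n // n ∈ T} → κ → F) (hx : ∀ k, k ∉ A → ∀ n m, x n k = x m k)
    (hv : ∀ k ∈ A, (Set.range fun n => x n k).ncard ≤ v) :
    ∃ (a : ι → κ → Fin v) (val : κ → Fin v → F), (∀ n k, x n k = val k (a n.1 k)) ∧
      ∀ n ∈ T, ∀ k ∉ A, a n k = i₀ := by
  classical
  have key : ∀ k, ∃ (a : {n // n ∈ T} → Fin v) (val : Fin v → F),
      (∀ n, x n k = val (a n)) ∧ (k ∉ A → ∀ n, a n = i₀) := by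
    intro k
    by_cases hk : k ∈ A
    · let R := Set.range fun n => x n k
      have hfin : Finite R := Set.finite_range _
      have hle : Nat.card R ≤ v := hv k hk
      let f : R → Fin v := fun r => Fin.castLE hle (Finite.equivFin R r)
      have hf : Function.Injective f :=
        (Fin.castLE_injective hle).comp (Finite.equivFin R).injective
      refine ⟨fun n => f ⟨x n k, n, rfl⟩, Function.extend f Subtype.val 0, fun n => ?_,
        fun h => absurd hk h⟩
      rw [hf.extend_apply]
    · by_cases hT : Nonempty {n // n ∈ T}
      · obtain ⟨n₀⟩ := hT
        exact ⟨fun _ => i₀, fun _ => x n₀ k, fun n => hx k hk n n₀, fun _ _ => rfl⟩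
      · exact ⟨fun _ => i₀, 0, fun n => absurd ⟨n⟩ hT, fun _ _ => rfl⟩
  choose a val h1 h2 using key
  refine ⟨fun n k => if h : n ∈ T then a k ⟨n, h⟩ else i₀, val, fun n k => ?_,
    fun n hn k hk => ?_⟩
  · simp [h1 k n]
  · simp [hn, h2 k hk]

/-- The maximal minor on given distinct rows of a generic matrix is a nonzero polynomial. -/
theorem exists_poly_minor (F : Type) [Field F] {N K : ℕ} (g : Fin K → Fin N)
    (hg : Function.Injective g) :
    ∃ p : MvPolynomial (Fin N × Fin K) F, p ≠ 0 ∧ p.totalDegree ≤ N ∧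
      ∀ s : Fin N × Fin K → F, MvPolynomial.eval s p ≠ 0 →
        IsUnit ((Matrix.of fun n k => s (n, k)).submatrix g id) := by
  let B : Matrix (Fin K) (Fin K) (MvPolynomial (Fin N × Fin K) F) :=
    Matrix.of fun i k => MvPolynomial.X (g i, k)
  have hB : ∀ s : Fin N × Fin K → F, MvPolynomial.eval s B.det =
      ((Matrix.of fun n k => s (n, k)).submatrix g id).det := by
    intro s
    rw [RingHom.map_det]
    congr 1
    ext i k
    simp [B]
  refine ⟨B.det, fun h0 => ?_, ?_, fun s hs => ?_⟩
  · have h1 := hB fun q => if q.1 = g q.2 then 1 else 0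
    have h2 : (Matrix.of fun n k => if n = g k then (1 : F) else 0).submatrix g id = 1 := by
      ext i k
      simp [Matrix.one_apply, hg.eq_iff]
    rw [h0, h2] at h1
    simp at h1
  · refine (totalDegree_det_le_card _ fun i k => by simp [B]).trans ?_
    simpa using Fintype.card_le_of_injective g hg
  · rw [hB] at hs
    rw [Matrix.isUnit_iff_isUnit_det]
    exact hs.isUnit

/-- Achievability for the region `N ≥ K + 2β(v-1)` with `t = K + 2β(v-1)`: over any
large enough finite field there is an MDS generator matrix such that any two
`(β,v)`-adversarial assignments on any `t` encoding nodes that produce the same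
coded symbols agree on all sources honest in both. -/
theorem stmt14 {N h β v : ℕ} (hh : 1 ≤ h) (hβ : 1 ≤ β) (hv : 1 ≤ v)
    (hN : h + β + 2 * β * (v - 1) ≤ N) :
    ∃ q₀ : ℕ, ∀ (F : Type) [Field F] [Fintype F], q₀ ≤ Fintype.card F →
      ∃ G : Matrix (Fin N) (Fin (h + β)) F,
        (∀ g : Fin (h + β) → Fin N, Function.Injective g →
          IsUnit (G.submatrix g id)) ∧
        (∀ T : Finset (Fin N), T.card = h + β + 2 * β * (v - 1) →
          ∀ A A' : Finset (Fin (h + β)), A.card ≤ β → A'.card ≤ β →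
          ∀ x z : {n // n ∈ T} → (Fin (h + β) → F),
            (∀ k, k ∉ A → ∀ n m, x n k = x m k) →
            (∀ k ∈ A, (Set.range fun n => x n k).ncard ≤ v) →
            (∀ k, k ∉ A' → ∀ n m, z n k = z m k) →
            (∀ k ∈ A', (Set.range fun n => z n k).ncard ≤ v) →
            (∀ n : {n // n ∈ T}, ∑ k, G n.1 k * x n k = ∑ k, G n.1 k * z n k) →
            ∀ k, k ∉ A → k ∉ A' → ∀ n, x n k = z n k) := by
  classical
  let L := Fin N → Fin (h + β) → Fin v
  refine ⟨Fintype.card ((Finset (Fin N) × L × L) ⊕ (Fin (h + β) → Fin N)) * N + 1, ?_⟩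
  intro F _ _ hF
  have : Nonempty (Fin (h + β)) := ⟨⟨0, by omega⟩⟩
  -- Labellings violating the dimension bound and non-injective `g` impose no condition on `G`.
  have hconf : ∀ q : Finset (Fin N) × L × L, ∃ p : MvPolynomial (Fin N × Fin (h + β)) F,
      p ≠ 0 ∧ p.totalDegree ≤ N ∧ ∀ s, MvPolynomial.eval s p ≠ 0 → q.1.Nonempty →
        Module.finrank F (Submodule.span F
          {m | ∃ n ∈ q.1, ∃ k, incidence F k (q.2.1 n k) (q.2.2 n k) = m}) ≤ q.1.card →
        ∃ n ∈ q.1, ∀ l : (Fin (h + β) × Fin v × Bool → F) →ₗ[F] F,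
          (∀ n ∈ q.1, ∑ k, s (n, k) * l (incidence F k (q.2.1 n k) (q.2.2 n k)) = 0) →
          ∀ k, l (incidence F k (q.2.1 n k) (q.2.2 n k)) = 0 := by
    intro q
    by_cases hq : q.1.Nonempty ∧ Module.finrank F (Submodule.span F
          {m | ∃ n ∈ q.1, ∃ k, incidence F k (q.2.1 n k) (q.2.2 n k) = m}) ≤ q.1.card
    · obtain ⟨p, h0, hd, hp⟩ := exists_poly_of_finrank_le
        (fun n k => incidence F k (q.2.1 n k) (q.2.2 n k))
        (fun n k => incidence_ne_zero F _ _ _) q.1 hq.1 hq.2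
      exact ⟨p, h0, by simpa using hd, fun s hs _ _ => hp s hs⟩
    · exact ⟨1, one_ne_zero, by simp, fun s _ h1 h2 => absurd ⟨h1, h2⟩ hq⟩
  have hmds : ∀ g : Fin (h + β) → Fin N, ∃ p : MvPolynomial (Fin N × Fin (h + β)) F,
      p ≠ 0 ∧ p.totalDegree ≤ N ∧ ∀ s, MvPolynomial.eval s p ≠ 0 → Function.Injective g →
        IsUnit ((Matrix.of fun n k => s (n, k)).submatrix g id) := by
    intro g
    by_cases hg : Function.Injective g
    · obtain ⟨p, h0, hd, hp⟩ := exists_poly_minor F g hg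
      exact ⟨p, h0, hd, fun s hs _ => hp s hs⟩
    · exact ⟨1, one_ne_zero, by simp, fun s _ h1 => absurd h1 hg⟩
  choose p hp0 hpd hp using hconf
  choose r hr0 hrd hr using hmds
  obtain ⟨s, hs⟩ := exists_eval_ne_zero (Sum.elim p r) N
    (by rintro (q | g); exacts [hp0 q, hr0 g]) (by rintro (q | g); exacts [hpd q, hrd g])
    (by omega)
  refine ⟨Matrix.of fun n k => s (n, k), fun g hg => hr g s (hs (Sum.inr g)) hg, ?_⟩
  intro T hT A A' hA hA' x z hx hxv hz hzv hsum k hk hk' n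
  obtain ⟨a, xv, hxa, ha⟩ := exists_labels ⟨0, hv⟩ T A x hx hxv
  obtain ⟨b, zv, hzb, hb⟩ := exists_labels ⟨0, hv⟩ T A' z hz hzv
  have hrank := finrank_span_incidence_le F ⟨0, hv⟩ T A A' a b ha hb
  have hle : h + β + A.card * (v - 1) + A'.card * (v - 1) ≤ T.card := by
    have h1 := Nat.mul_le_mul_right (v - 1) hA
    have h2 := Nat.mul_le_mul_right (v - 1) hA'
    rw [hT, mul_assoc]
    omega
  obtain ⟨n₁, hn₁, hl⟩ := hp (T, a, b) s (hs (Sum.inl (T, a, b))) ⟨n.1, n.2⟩ (hrank.trans hle)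
  let l : (Fin (h + β) × Fin v × Bool → F) →ₗ[F] F := Fintype.linearCombination F
    fun i => if i.2.2 then xv i.1 i.2.1 else - zv i.1 i.2.1
  have hlv : ∀ (n : {n // n ∈ T}) k, l (incidence F k (a n k) (b n k)) = x n k - z n k := by
    intro n k
    simp [l, incidence, Fintype.linearCombination_apply_single, hxa, hzb, sub_eq_add_neg]
  have hzero := hl l (fun n hn => by
    have h1 := hsum ⟨n, hn⟩
    rw [← sub_eq_zero, ← Finset.sum_sub_distrib] at h1
    rw [← h1]
    refine Finset.sum_congr rfl fun k _ => ?_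
    rw [hlv ⟨n, hn⟩ k]
    simp [mul_sub]) k
  rw [hlv ⟨n₁, hn₁⟩ k] at hzero
  rw [hx k hk n ⟨n₁, hn₁⟩, hz k hk' n ⟨n₁, hn₁⟩]
  exact sub_eq_zero.1 hzero
end

section
/- (Reed–Solomon codes achieve t*_linear.) Let K = h + β with h ≥ 1 and β ≥ 1, let v ≥ 1, let N ≥ K + 2β(v−1), and set t = K + 2β(v−1). There exists a threshold q₀ ∈ ℕ (depending only on N, K, β, v) such that for every finite field F with |F| ≥ q₀ there exist pairwise distinct elements λ₁,…,λ_N ∈ F for which the Vandermonde (Reed–Solomon) generator matrix G with entries G_{n,k} = λ_n^{k−1} (1 ≤ n ≤ N, 1 ≤ k ≤ K) satisfies the correctness property: for every subset T ⊆ Fin N with |T| = t, every pair of adversary sets A, Â ⊆ Fin K with |A| ≤ β and |Â| ≤ β, and every pair of families x, z : T → (Fin K → F) such that x is constant in n on each k ∉ A and takes at most v values in n on each k ∈ A, z is constant in n on each k ∉ Â and takes at most v values in n on each k ∈ Â, and Σ_k G_{n,k} · x_n(k) = Σ_k G_{n,k} · z_n(k) for all n ∈ T, one has x_n(k) = z_n(k)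 for every k ∉ A ∪ Â and every n ∈ T. -/
/-!
Fix two assignments with the same coded symbols, an honest source `k₀`, and a base node `n₀`.
Writing each adversarial source as its value at `n₀` plus a combination of the indicators of its
other level sets turns the equality of the coded symbols into a linear relation between columns of
the form `n ↦ lam n ^ k * U n`, where `U` is a zero-one vector and `k` is the *colour* of the column.
Only one column has colour `k₀`, it is `n ↦ lam n ^ k₀`, and its coefficient is the difference of
the two values of the source `k₀`. There are at most `K - 1 + 2β(v-1) < t` other columns. So it
suffices that for suitable `lam` the column of colour `k₀` is not in the span of the others
(`coeff_eq_zero`).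

The tool is an expansion of determinants (`det_colour_expand`): the determinant of a square matrix
with entries `lam (r i) ^ κ j * U i j` is a sum, over assignments `f` of colours to rows, of the
monomial `∏ lam (r i) ^ f i` times the determinant of the matrix that keeps only the entries with
`f i = κ j`. If the determinant is nonzero, some `f` has a nonzero coefficient; conversely, distinct
`f` have distinct monomials, so one nonzero coefficient makes the determinant a nonzero polynomial
in `lam` (`patternPoly_map_ne_zero`). These polynomials form a finite family defined over `ℤ`, so
over every large field some `lam` avoids the zeros of all those that are nonzero
(`exists_good_point`).

Now let `s` be the rank of the columns other than `k₀` and choose a nonsingular `s × s` submatrix.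
It has a nonzero coefficient for some assignment `f`. As `s < t` there is an unused row; assigning
to it the colour `k₀` borders the coefficient matrix triangularly, so the bordered matrix, with
column `k₀` added, has a nonzero determinant. Hence column `k₀` is not in the span of the others.
-/

/-! ### Points avoiding finitely many hypersurfaces -/

open MvPolynomial in
/-- One evaluation point over every large finite field avoids the zero sets of all those members of
a finite family of integer polynomials that do not vanish identically over that field. The bound on
the field size is uniform because reduction of the coefficients does not raise the degree. -/
theorem exists_good_point {N : ℕ} {ι : Type} [Fintype ι] (p : ι → MvPolynomial (Fin N) ℤ) :
    ∃ q₀ : ℕ, ∀ (F : Type) [Field F] [Fintype F], q₀ ≤ Fintype.card F →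
      ∃ lam : Fin N → F, ∀ i, map (Int.castRingHom F) (p i) ≠ 0 →
        eval lam (map (Int.castRingHom F) (p i)) ≠ 0 := by
  classical
  refine ⟨∑ i, (p i).totalDegree + 1, fun F _ _ hF => ?_⟩
  let S : Finset ι := Finset.univ.filter fun i => map (Int.castRingHom F) (p i) ≠ 0
  let Q : MvPolynomial (Fin N) F := ∏ i ∈ S, map (Int.castRingHom F) (p i)
  have hQ : Q ≠ 0 := Finset.prod_ne_zero_iff.2 fun i hi => (Finset.mem_filter.1 hi).2
  have hdeg : Q.totalDegree < Fintype.card F := by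
    have h1 : Q.totalDegree ≤ ∑ i ∈ S, (map (Int.castRingHom F) (p i)).totalDegree :=
      totalDegree_finsetProd _ _
    have h2 : ∑ i ∈ S, (map (Int.castRingHom F) (p i)).totalDegree ≤
        ∑ i ∈ S, (p i).totalDegree :=
      Finset.sum_le_sum fun i _ => Finset.sup_mono (support_map_subset _ _)
    have h3 : ∑ i ∈ S, (p i).totalDegree ≤ ∑ i, (p i).totalDegree :=
      Finset.sum_le_sum_of_subset (Finset.subset_univ _)
    omega
  by_contra! hcon
  refine hQ (eq_zero_of_eval_zero_at_prod_finset Q (fun _ => Finset.univ) ?_ ?_)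
  · intro i
    exact (degreeOf_le_totalDegree Q i).trans_lt (by simpa using hdeg)
  · intro x _
    obtain ⟨i, hi, hx⟩ := hcon x
    rw [map_prod]
    exact Finset.prod_eq_zero (Finset.mem_filter.2 ⟨Finset.mem_univ i, hi⟩) hx

/-! ### Expansion of coloured determinants -/

/-- Splitting every row according to the colours `κ j` of the columns and expanding the determinant
multilinearly gives a sum over all assignments `f` of colours to rows. -/
theorem det_colour_expand {R m κT : Type*} [CommRing R] [Fintype m] [DecidableEq m] [Fintype κT]
    [DecidableEq κT] (μ : m → κT → R) (κ : m → κT) (U : m → m → R) :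
    (Matrix.of fun i j => μ i (κ j) * U i j).det =
      ∑ f : m → κT, (∏ i, μ i (f i)) *
        (Matrix.of fun i j => if f i = κ j then U i j else 0).det := by
  have h1 : (fun i j => μ i (κ j) * U i j) =
      fun i => ∑ k : κT, μ i k • (fun j => if k = κ j then U i j else 0) := by
    funext i j
    simp [Finset.sum_apply]
  have h2 := (Matrix.detRowAlternating (n := m) (R := R)).toMultilinearMap.map_sum
    (fun (i : m) (k : κT) => μ i k • (fun j => if k = κ j then U i j else 0 : m → R))
  rw [← h1] at h2
  refine h2.trans (Finset.sum_congr rfl fun f _ => ?_)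
  exact (Matrix.detRowAlternating (n := m) (R := R)).toMultilinearMap.map_smul_univ
    (fun i => μ i (f i)) (fun i j => if f i = κ j then U i j else 0)

/-- The determinant of a square matrix with entries `X (r i) ^ κ j` times a zero-one pattern. -/
noncomputable def patternPoly {N K : ℕ} {m : Type*} [Fintype m] [DecidableEq m] (r : m → Fin N)
    (κ : m → Fin K) (U : m → m → Bool) : MvPolynomial (Fin N) ℤ :=
  (Matrix.of fun i j => (MvPolynomial.X (r i) : MvPolynomial (Fin N) ℤ) ^ (κ j : ℕ) *
    (if U i j then 1 else 0)).det

/-- The pattern polynomial does not vanish over `F` as soon as one of the coloured submatrices in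
its expansion is nonsingular: for distinct rows, distinct assignments give distinct monomials, so
the terms of the expansion cannot cancel. -/
theorem patternPoly_map_ne_zero {F : Type*} [Field F] {N K : ℕ} {m : Type*} [Fintype m]
    [DecidableEq m] (r : m → Fin N) (hr : Function.Injective r) (κ : m → Fin K)
    (U : m → m → Bool) (f : m → Fin K)
    (hf : (Matrix.of fun i j => if f i = κ j then (if U i j then (1 : F) else 0) else 0).det ≠ 0) :
    MvPolynomial.map (Int.castRingHom F) (patternPoly r κ U) ≠ 0 := by
  have key : MvPolynomial.map (Int.castRingHom F) (patternPoly r κ U) =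
      ∑ g : m → Fin K, MvPolynomial.monomial (∑ i, Finsupp.single (r i) (g i : ℕ))
        (Matrix.of fun i j =>
          if g i = κ j then (if U i j then (1 : F) else 0) else 0).det := by
    rw [patternPoly, RingHom.map_det]
    have h1 := det_colour_expand
      (fun i (k : Fin K) => (MvPolynomial.X (r i) : MvPolynomial (Fin N) F) ^ (k : ℕ)) κ
      (fun i j => if U i j then 1 else 0)
    refine Eq.trans ?_ (h1.trans (Finset.sum_congr rfl fun g _ => ?_))
    · congr 1
      ext1 i j
      simp [apply_ite (MvPolynomial.map (Int.castRingHom F))]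
    · have h2 : (Matrix.of fun i j => if g i = κ j then
          (if U i j then (1 : MvPolynomial (Fin N) F) else 0) else 0).det =
          MvPolynomial.C (Matrix.of fun i j =>
            if g i = κ j then (if U i j then (1 : F) else 0) else 0).det := by
        rw [RingHom.map_det]
        congr 1
        ext1 i j
        simp [apply_ite (MvPolynomial.C (σ := Fin N) (R := F))]
      rw [h2, mul_comm, ← mul_one (Matrix.det _), ← MvPolynomial.C_mul_monomial, mul_one]
      congr 1
      rw [MvPolynomial.monomial_sum_one]
      exact Finset.prod_congr rfl fun i _ => MvPolynomial.X_pow_eq_monomial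
  intro h0
  apply hf
  have hc := congrArg (MvPolynomial.coeff (∑ i, Finsupp.single (r i) (f i : ℕ))) (key.symm.trans h0)
  rw [MvPolynomial.coeff_sum, Finset.sum_eq_single f] at hc
  · simpa using hc
  · intro g _ hg
    rw [MvPolynomial.coeff_monomial, if_neg]
    intro he
    apply hg
    funext i
    have h3 := DFunLike.congr_fun he (r i)
    simp only [Finsupp.coe_finsetSum, Finset.sum_apply, Finsupp.single_apply, hr.eq_iff,
      Finset.sum_ite_eq', Finset.mem_univ, if_true] at h3
    exact Fin.ext h3
  · simp

theorem eval_patternPoly {F : Type*} [Field F] {N K : ℕ} {m : Type*} [Fintype m]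
    [DecidableEq m] (r : m → Fin N) (κ : m → Fin K) (U : m → m → Bool) (lam : Fin N → F) :
    MvPolynomial.eval lam (MvPolynomial.map (Int.castRingHom F) (patternPoly r κ U)) =
      (Matrix.of fun i j => lam (r i) ^ (κ j : ℕ) * (if U i j then 1 else 0)).det := by
  rw [patternPoly, RingHom.map_det, RingHom.map_det]
  congr 1
  ext1 i j
  cases hU : U i j <;> simp [hU]

/-! ### Independence of a singly coloured column -/

/-- A matrix over a field has a nonsingular square submatrix whose columns span the column space. -/
theorem exists_nonsingular_submatrix {F I J : Type} [Field F] [Fintype I] [Fintype J]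
    (M : I → J → F) :
    ∃ (s : ℕ) (r : Fin s → I) (c : Fin s → J), Function.Injective r ∧ Function.Injective c ∧
      (Matrix.of fun i j => M (r i) (c j)).det ≠ 0 ∧
      Submodule.span F (Set.range fun (j : Fin s) (i : I) => M i (c j)) =
        Submodule.span F (Set.range fun (j : J) (i : I) => M i j) := by
  classical
  obtain ⟨κ, a, ha, hspan, hli⟩ := exists_linearIndependent' F (fun (j : J) (i : I) => M i j)
  have : Finite κ := Finite.of_injective a ha
  have : Fintype κ := Fintype.ofFinite κ
  -- The rows of the selected columns span, since row rank equals column rank.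
  let B : Matrix I κ F := Matrix.of fun i j => M i (a j)
  have hrank : B.rank = Fintype.card κ := by
    rw [← Matrix.rank_transpose]
    exact LinearIndependent.rank_matrix (M := B.transpose) hli
  obtain ⟨ρ, b, hb, hspan', hli'⟩ := exists_linearIndependent' F B.row
  have : Finite ρ := Finite.of_injective b hb
  have : Fintype ρ := Fintype.ofFinite ρ
  have hcard : Fintype.card ρ = Fintype.card κ := by
    rw [← hrank, Matrix.rank_eq_finrank_span_row, ← hspan', finrank_span_eq_card hli']
  let e : Fin (Fintype.card κ) ≃ κ := (Fintype.equivFin κ).symm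
  let e' : Fin (Fintype.card κ) ≃ ρ := (Fintype.equivFinOfCardEq hcard).symm
  refine ⟨Fintype.card κ, b ∘ e', a ∘ e, hb.comp e'.injective, ha.comp e.injective, ?_, ?_⟩
  · rw [← isUnit_iff_ne_zero, ← Matrix.isUnit_iff_isUnit_det,
      ← Matrix.linearIndependent_rows_iff_isUnit]
    have h1 : LinearIndependent F ((B.row ∘ b) ∘ e') := hli'.comp _ e'.injective
    exact h1.map' (LinearMap.funLeft F F e) (LinearMap.ker_eq_bot.2
      (LinearMap.funLeft_injective_of_surjective F F e e.surjective))
  · rw [← hspan]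
    congr 1
    exact e.surjective.range_comp ((fun (j : J) (i : I) => M i j) ∘ a)

/-- For evaluation points avoiding the zeros of the nonzero pattern polynomials, the column of a
colour `k₀` that no other column carries is not a combination of the other columns, provided there
are fewer of these than rows. -/
theorem coeff_eq_zero {F I J : Type} [Field F] [Fintype I] [Fintype J] {N K : ℕ} (lam : Fin N → F)
    (hgood : ∀ (s : ℕ) (r : Fin s → Fin N) (κ : Fin s → Fin K) (U : Fin s → Fin s → Bool),
      Function.Injective r → MvPolynomial.map (Int.castRingHom F) (patternPoly r κ U) ≠ 0 →
      MvPolynomial.eval lam (MvPolynomial.map (Int.castRingHom F) (patternPoly r κ U)) ≠ 0)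
    (ν : I → Fin N) (hν : Function.Injective ν) (κ : J → Fin K) (U : I → J → Bool)
    (hcard : Fintype.card J < Fintype.card I) (k₀ : Fin K) (hκ : ∀ j, κ j ≠ k₀) (a : F) (y : J → F)
    (hrel : ∀ n, a * lam (ν n) ^ (k₀ : ℕ) +
      ∑ j, y j * (lam (ν n) ^ (κ j : ℕ) * (if U n j then 1 else 0)) = 0) : a = 0 := by
  classical
  by_contra ha
  obtain ⟨s, r, c, hr, hc, hdet, hspan⟩ :=
    exists_nonsingular_submatrix fun n j => lam (ν n) ^ (κ j : ℕ) * (if U n j then (1 : F) else 0)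
  -- The selected square submatrix owes its nonsingularity to some assignment of colours to its rows.
  obtain ⟨f, hf⟩ : ∃ f : Fin s → Fin K, (Matrix.of fun i j =>
      if f i = κ (c j) then (if U (r i) (c j) then (1 : F) else 0) else 0).det ≠ 0 := by
    by_contra! hcon
    apply hdet
    refine (det_colour_expand (fun i (k : Fin K) => lam (ν (r i)) ^ (k : ℕ)) (κ ∘ c)
      (fun i j => if U (r i) (c j) then (1 : F) else 0)).trans ?_
    exact Finset.sum_eq_zero fun f _ => mul_eq_zero_of_right _ (hcon f)
  have hs : s ≤ Fintype.card J := by simpa using Fintype.card_le_of_injective c hc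
  obtain ⟨n₀, hn₀⟩ : ∃ n₀, ∀ i, r i ≠ n₀ := by
    by_contra! hcon
    have := Fintype.card_le_of_surjective r hcon
    simp at this
    omega
  -- Giving the unused row `n₀` the colour `k₀` makes the bordered matrix block triangular.
  have hr' : Function.Injective (Fin.cons n₀ r : Fin (s + 1) → I) :=
    Fin.cons_injective_iff.2 ⟨by rintro ⟨i, hi⟩; exact hn₀ i hi, hr⟩
  let κ' : Fin (s + 1) → Fin K := Fin.cons k₀ (κ ∘ c)
  let U' : Fin (s + 1) → Fin (s + 1) → Bool := fun i =>
    Fin.cons true (fun j => U ((Fin.cons n₀ r : Fin (s + 1) → I) i) (c j))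
  have hne := hgood (s + 1) (ν ∘ (Fin.cons n₀ r : Fin (s + 1) → I)) κ' U' (hν.comp hr')
    (patternPoly_map_ne_zero _ (hν.comp hr') κ' U' (Fin.cons k₀ f) (by
      rw [Matrix.det_succ_row_zero, Fin.sum_univ_succ, Finset.sum_eq_zero]
      · simpa [κ', U', Matrix.submatrix] using hf
      · intro j _
        simp [κ', (hκ (c j)).symm]))
  rw [eval_patternPoly] at hne
  -- The bordered matrix is singular, since its first column depends on the selected ones.
  have hmem : (fun n => lam (ν n) ^ (k₀ : ℕ)) ∈ Submodule.span F (Set.range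
      fun (j : J) (n : I) => lam (ν n) ^ (κ j : ℕ) * (if U n j then (1 : F) else 0)) := by
    rw [Submodule.mem_span_range_iff_exists_fun]
    refine ⟨fun j => -a⁻¹ * y j, ?_⟩
    funext n
    have h1 := hrel n
    simp only [Finset.sum_apply, Pi.smul_apply, smul_eq_mul, mul_assoc, ← Finset.mul_sum]
    rw [eq_neg_of_add_eq_zero_right h1]
    field_simp
  rw [← hspan, Submodule.mem_span_range_iff_exists_fun] at hmem
  obtain ⟨d, hd⟩ := hmem
  refine hne (Matrix.exists_mulVec_eq_zero_iff.1 ⟨Fin.cons (-1) d, ?_, ?_⟩)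
  · intro h0
    simpa using congrFun h0 0
  · funext i
    have h1 := congrFun hd ((Fin.cons n₀ r : Fin (s + 1) → I) i)
    simp only [Finset.sum_apply, Pi.smul_apply, smul_eq_mul] at h1
    simp only [Matrix.mulVec, dotProduct, Matrix.of_apply, Fin.sum_univ_succ, Fin.cons_zero,
      Fin.cons_succ, Function.comp_apply, κ', U', if_true, Pi.zero_apply, ← h1, mul_comm (d _)]
    ring

/-! ### Level-set decomposition of adversarial assignments -/

/-- A function is its value at `n₀` plus a combination of the indicators of its other level sets. -/
theorem eq_base_add_sum_levels {F I : Type} [Field F] [Fintype I] [DecidableEq F] (g : I → F)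
    (n₀ n : I) : g n = g n₀ + ∑ a ∈ (Finset.univ.image g).erase (g n₀),
      (a - g n₀) * (if decide (g n = a) then 1 else 0) := by
  by_cases hn : g n = g n₀
  · rw [Finset.sum_eq_zero, add_zero, hn]
    intro a ha
    have : g n ≠ a := fun h => (Finset.mem_erase.1 ha).1 (h.symm.trans hn)
    simp [this]
  · rw [Finset.sum_eq_single (g n)]
    · simp
    · intro a _ ha
      simp [ha.symm]
    · intro h
      simp [hn] at h

/-- The nonbase levels of the sources in `A`: pairs of a source `k ∈ A` and a value that `x · k`
takes other than its value at `n₀`. -/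
def levelSet {F I : Type} [Fintype I] [DecidableEq F] {K : ℕ} (A : Finset (Fin K))
    (x : I → Fin K → F) (n₀ : I) : Finset (Σ _ : Fin K, F) :=
  A.sigma fun k => (Finset.univ.image fun n => x n k).erase (x n₀ k)

/-- Each adversarial source contributes at most `v - 1` nonbase levels. -/
theorem card_levelSet_le {F I : Type} [Fintype I] [DecidableEq F] {K β v : ℕ}
    (A : Finset (Fin K)) (hA : A.card ≤ β) (x : I → Fin K → F) (n₀ : I)
    (hx : ∀ k ∈ A, (Set.range fun n => x n k).ncard ≤ v) :
    (levelSet A x n₀).card ≤ β * (v - 1) := by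
  rw [levelSet, Finset.card_sigma]
  calc _ ≤ ∑ k ∈ A, (v - 1) := by
        refine Finset.sum_le_sum fun k hk => ?_
        have h1 := hx k hk
        rw [← Set.image_univ, ← Finset.coe_univ, ← Finset.coe_image, Set.ncard_coe_finset] at h1
        rw [Finset.card_erase_of_mem (Finset.mem_image_of_mem _ (Finset.mem_univ n₀))]
        omega
    _ = A.card * (v - 1) := by simp
    _ ≤ β * (v - 1) := Nat.mul_le_mul_right _ hA

/-- A coded symbol is the coded symbol of the base values plus a combination of indicators of the
nonbase levels of the adversarial sources. -/
theorem coded_eq {F I : Type} [Field F] [Fintype I] [DecidableEq F] {K : ℕ}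
    (A : Finset (Fin K)) (x : I → Fin K → F) (hx : ∀ k, k ∉ A → ∀ n m, x n k = x m k)
    (n₀ n : I) (l : F) :
    ∑ k : Fin K, l ^ (k : ℕ) * x n k = ∑ k : Fin K, l ^ (k : ℕ) * x n₀ k +
      ∑ p ∈ levelSet A x n₀, (p.2 - x n₀ p.1) *
        (l ^ (p.1 : ℕ) * (if decide (x n p.1 = p.2) then 1 else 0)) := by
  rw [levelSet, Finset.sum_sigma, ← sub_eq_iff_eq_add', ← Finset.sum_sub_distrib]
  rw [← Finset.sum_subset (Finset.subset_univ A)]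
  · refine Finset.sum_congr rfl fun k _ => ?_
    have h1 := eq_base_add_sum_levels (fun n => x n k) n₀ n
    rw [← mul_sub, sub_eq_iff_eq_add'.2 h1, Finset.mul_sum]
    exact Finset.sum_congr rfl fun a _ => by ring
  · intro k _ hk
    rw [hx k hk n n₀, sub_self]

/-- Correctness on a single node set, for evaluation points avoiding the zeros of the nonzero
pattern polynomials. -/
theorem honest_eq {F I : Type} [Field F] [Fintype I] {N K β v : ℕ} (hK : 1 ≤ K) (lam : Fin N → F)
    (hgood : ∀ (s : ℕ) (r : Fin s → Fin N) (κ : Fin s → Fin K) (U : Fin s → Fin s → Bool),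
      Function.Injective r → MvPolynomial.map (Int.castRingHom F) (patternPoly r κ U) ≠ 0 →
      MvPolynomial.eval lam (MvPolynomial.map (Int.castRingHom F) (patternPoly r κ U)) ≠ 0)
    (ν : I → Fin N) (hν : Function.Injective ν) (hI : Fintype.card I = K + 2 * β * (v - 1))
    (A A' : Finset (Fin K)) (hA : A.card ≤ β) (hA' : A'.card ≤ β) (x z : I → Fin K → F)
    (hx : ∀ k, k ∉ A → ∀ n m, x n k = x m k)
    (hxv : ∀ k ∈ A, (Set.range fun n => x n k).ncard ≤ v)
    (hz : ∀ k, k ∉ A' → ∀ n m, z n k = z m k)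
    (hzv : ∀ k ∈ A', (Set.range fun n => z n k).ncard ≤ v)
    (hxz : ∀ n, ∑ k : Fin K, lam (ν n) ^ (k : ℕ) * x n k =
      ∑ k : Fin K, lam (ν n) ^ (k : ℕ) * z n k)
    (k₀ : Fin K) (hkA : k₀ ∉ A) (hkA' : k₀ ∉ A') (n₀ : I) : x n₀ k₀ = z n₀ k₀ := by
  classical
  have hcA := card_levelSet_le A hA x n₀ hxv
  have hcA' := card_levelSet_le A' hA' z n₀ hzv
  -- The columns other than `k₀`: constants, levels of `x`, levels of `z`.
  let J := {k : Fin K // k ≠ k₀} ⊕ ({p // p ∈ levelSet A x n₀} ⊕ {p // p ∈ levelSet A' z n₀})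
  have hcard : Fintype.card J < Fintype.card I := by
    have h1 : Fintype.card J = (K - 1) + ((levelSet A x n₀).card + (levelSet A' z n₀).card) := by
      simp [J, Fintype.card_sum]
    rw [hI, h1, mul_assoc]
    omega
  refine sub_eq_zero.1 (coeff_eq_zero (J := J) lam hgood ν hν
    (Sum.elim (fun k => k.1) (Sum.elim (fun p => p.1.1) (fun p => p.1.1)))
    (fun n => Sum.elim (fun _ => true)
      (Sum.elim (fun p => decide (x n p.1.1 = p.1.2)) (fun p => decide (z n p.1.1 = p.1.2))))
    hcard k₀ ?_ (x n₀ k₀ - z n₀ k₀)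
    (Sum.elim (fun k => x n₀ k.1 - z n₀ k.1)
      (Sum.elim (fun p => p.1.2 - x n₀ p.1.1) (fun p => -(p.1.2 - z n₀ p.1.1)))) ?_)
  · rintro (k | p | p)
    · exact k.2
    · exact fun h => hkA (h ▸ (Finset.mem_sigma.1 p.2).1)
    · exact fun h => hkA' (h ▸ (Finset.mem_sigma.1 p.2).1)
  · intro n
    have h1 := hxz n
    rw [coded_eq A x hx n₀ n, coded_eq A' z hz n₀ n,
      ← Finset.sum_coe_sort (levelSet A x n₀), ← Finset.sum_coe_sort (levelSet A' z n₀)] at h1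
    have h2 : ∑ k : Fin K, lam (ν n) ^ (k : ℕ) * (x n₀ k - z n₀ k) =
        lam (ν n) ^ (k₀ : ℕ) * (x n₀ k₀ - z n₀ k₀) +
          ∑ k : {k : Fin K // k ≠ k₀}, lam (ν n) ^ (k.1 : ℕ) * (x n₀ k.1 - z n₀ k.1) :=
      Fintype.sum_eq_add_sum_subtype_ne _ k₀
    have h3 : ∑ k : Fin K, lam (ν n) ^ (k : ℕ) * (x n₀ k - z n₀ k) =
        ∑ k : Fin K, lam (ν n) ^ (k : ℕ) * x n₀ k - ∑ k : Fin K, lam (ν n) ^ (k : ℕ) * z n₀ k := by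
      simp only [mul_sub, Finset.sum_sub_distrib]
    have h4 : ∑ k : {k : Fin K // k ≠ k₀}, (x n₀ k.1 - z n₀ k.1) * (lam (ν n) ^ (k.1 : ℕ) * 1) =
        ∑ k : {k : Fin K // k ≠ k₀}, lam (ν n) ^ (k.1 : ℕ) * (x n₀ k.1 - z n₀ k.1) :=
      Finset.sum_congr rfl fun k _ => by ring
    have h5 : ∑ p : {p // p ∈ levelSet A' z n₀}, -(p.1.2 - z n₀ p.1.1) *
          (lam (ν n) ^ (p.1.1 : ℕ) * (if decide (z n p.1.1 = p.1.2) then 1 else 0)) =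
        -∑ p : {p // p ∈ levelSet A' z n₀}, (p.1.2 - z n₀ p.1.1) *
          (lam (ν n) ^ (p.1.1 : ℕ) * (if decide (z n p.1.1 = p.1.2) then 1 else 0)) := by
      rw [← Finset.sum_neg_distrib]
      exact Finset.sum_congr rfl fun p _ => neg_mul _ _
    have h6 : (x n₀ k₀ - z n₀ k₀) * lam (ν n) ^ (k₀ : ℕ) +
        (∑ k : {k : Fin K // k ≠ k₀}, (x n₀ k.1 - z n₀ k.1) * (lam (ν n) ^ (k.1 : ℕ) * 1) +
        (∑ p : {p // p ∈ levelSet A x n₀}, (p.1.2 - x n₀ p.1.1) *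
          (lam (ν n) ^ (p.1.1 : ℕ) * (if decide (x n p.1.1 = p.1.2) then 1 else 0)) +
        ∑ p : {p // p ∈ levelSet A' z n₀}, -(p.1.2 - z n₀ p.1.1) *
          (lam (ν n) ^ (p.1.1 : ℕ) * (if decide (z n p.1.1 = p.1.2) then 1 else 0)))) = 0 := by
      rw [h4, h5]
      linear_combination h1 - h2 + h3
    rw [Fintype.sum_sum_type, Fintype.sum_sum_type]
    exact h6


/-- Reed–Solomon codes achieve `t*_linear`: over any large enough finite field there
are distinct evaluation points whose Vandermonde generator matrix `G n k = λ n ^ k`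
satisfies the correctness property for `t = K + 2β(v-1)` with `K = h + β`. -/
theorem stmt16 {N h β v : ℕ} (hh : 1 ≤ h) (hβ : 1 ≤ β) (hv : 1 ≤ v)
    (hN : h + β + 2 * β * (v - 1) ≤ N) :
    ∃ q₀ : ℕ, ∀ (F : Type) [Field F] [Fintype F], q₀ ≤ Fintype.card F →
      ∃ lam : Fin N → F, Function.Injective lam ∧
        (∀ T : Finset (Fin N), T.card = h + β + 2 * β * (v - 1) →
          ∀ A A' : Finset (Fin (h + β)), A.card ≤ β → A'.card ≤ β →
          ∀ x z : {n // n ∈ T} → (Fin (h + β) → F),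
            (∀ k, k ∉ A → ∀ n m, x n k = x m k) →
            (∀ k ∈ A, (Set.range fun n => x n k).ncard ≤ v) →
            (∀ k, k ∉ A' → ∀ n m, z n k = z m k) →
            (∀ k ∈ A', (Set.range fun n => z n k).ncard ≤ v) →
            (∀ n : {n // n ∈ T},
              ∑ k : Fin (h + β), lam n.1 ^ (k : ℕ) * x n k = ∑ k : Fin (h + β), lam n.1 ^ (k : ℕ) * z n k) →
            ∀ k, k ∉ A → k ∉ A' → ∀ n, x n k = z n k) := by
  classical
  -- The first summand indexes the differences `X i - X j`, which enforce distinct points.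
  let ι : Type := (Fin N × Fin N) ⊕ (s : Fin (N + 1)) ×
    ((Fin s → Fin N) × (Fin s → Fin (h + β)) × (Fin s → Fin s → Bool))
  let p : ι → MvPolynomial (Fin N) ℤ := Sum.elim
    (fun q => MvPolynomial.X q.1 - MvPolynomial.X q.2)
    (fun q => patternPoly q.2.1 q.2.2.1 q.2.2.2)
  obtain ⟨q₀, hq₀⟩ := exists_good_point p
  refine ⟨q₀, fun F _ _ hF => ?_⟩
  obtain ⟨lam, hlam⟩ := hq₀ F hF
  refine ⟨lam, ?_, ?_⟩
  · intro i j hij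
    by_contra hne
    refine hlam (Sum.inl (i, j)) ?_ (by simp [p, hij])
    simpa [p, sub_eq_zero] using fun h => hne (MvPolynomial.X_injective (R := F) h)
  have hgood : ∀ (s : ℕ) (r : Fin s → Fin N) (κ : Fin s → Fin (h + β))
      (U : Fin s → Fin s → Bool), Function.Injective r →
      MvPolynomial.map (Int.castRingHom F) (patternPoly r κ U) ≠ 0 →
      MvPolynomial.eval lam (MvPolynomial.map (Int.castRingHom F) (patternPoly r κ U)) ≠ 0 := by
    intro s r κ U hr
    have hs : s ≤ N := by simpa using Fintype.card_le_of_injective r hr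
    exact hlam (Sum.inr ⟨⟨s, by omega⟩, r, κ, U⟩)
  intro T hT A A' hA hA' x z hx hxv hz hzv hxz k₀ hkA hkA' n₀
  exact honest_eq (by omega) lam hgood (fun n : {n // n ∈ T} => n.1) Subtype.val_injective
    (by rw [Fintype.card_coe, hT]) A A' hA hA' x z hx hxv hz hzv hxz k₀ hkA hkA' n₀
end
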